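/- arXiv:2303.17140 — 2 statements merged into one kernel-verified Lean document; each statement's English description precedes it below -/
import Mathlib

section
/- Fix B with 1 < B < ∞ and let F₂(B) = F₂(φ) with φ(n) = B^n. Then the Hausdorff dimension of F₂(B) is at least s_B. -/
/-!
Write `g(s) = 3s - 1 - s²`. The dimension of `F₂(B)` is bounded below by `s` for every `s < s_B`
through a mass distribution on a Cantor subset.

For `1/2 < s < 1` suppose that a finite set `W` of words of a common length `N` satisfies
`∑_{w ∈ W} B^{-N g(s)} q(w)^{-2s} ≥ 8`. The Cantor set consists of the continued fractions obtained
by concatenating independent random blocks: a word of `W` drawn with probability proportional to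
`q(w)^{-2s}`, or a single digit drawn uniformly from `[A, 2A)`. Along such a concatenation the
ratio between the mass of a cylinder and the power `s` of its length is controlled by a product
of one factor per block: `4 / ∑_{w ∈ W} q(w)^{-2s} ≤ B^{-N g(s)} / 2` for a word and
`16 A^{2s-1}` for a digit. The words thus build up a reserve, and once at position `t` this
reserve exceeds `b^{g(s)}` with `b = B^{t+2}`, up to a constant, three digits of sizes
`b^{1-s}`, `b^s`, `b^{1-s}` are inserted; the two adjacent products are at least `b`, so the
point lies in `F₂(B)` when this happens infinitely often. The exponent `g(s)` is exactly what
keeps the ball estimate `μ(B(x, r)) ≤ C r^s` valid while the triple is being written; this is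
the schedule produced in `exists_schedule`. The ball estimate is `ball_le`, the resulting
dimension bound for block constructions is `le_dimH_of_blocks`, and `core` puts the pieces
together.

It remains to find `W`. If `1/2 < s < s_B`, the pressure at `s` is positive, so some partition
sum exceeds `8`, and so does a finite part of it (`le_dimH_of_lt_sB`). Here `s_B ≤ 1`
because the cylinders of a given order have total length at most one (`sB_le_one`). When
`s_B ≤ 1/2` one uses single digits and the divergence of the harmonic series
(`exists_gt_half`).
-/

open scoped ENNReal
open MeasureTheory Filter

/-- The Gauss map `T(x) = 1/x - ⌊1/x⌋`. -/
noncomputable def gaussMap (x : ℝ) : ℝ := 1 / x - ⌊1 / x⌋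

/-- The `n`-th partial quotient `a_n(x) = ⌊1 / T^{n-1}(x)⌋` (for `n ≥ 1`). -/
noncomputable def pq (x : ℝ) (n : ℕ) : ℕ := ⌊1 / (gaussMap^[n - 1] x)⌋₊

/-- The set `F₂(φ)` of irrational `x ∈ (0,1)` such that for infinitely many `n` there are
`1 ≤ k ≠ l ≤ n` with `a_k a_{k+1} ≥ φ(n)` and `a_l a_{l+1} ≥ φ(n)`. -/
def F2 (φ : ℕ → ℝ) : Set ℝ :=
  {x | x ∈ Set.Ioo (0 : ℝ) 1 ∧ Irrational x ∧
    {n : ℕ | ∃ k l : ℕ, 1 ≤ k ∧ k ≤ n ∧ 1 ≤ l ∧ l ≤ n ∧ k ≠ l ∧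
      φ n ≤ (pq x k : ℝ) * (pq x (k + 1) : ℝ) ∧
      φ n ≤ (pq x l : ℝ) * (pq x (l + 1) : ℝ)}.Infinite}

/-- The continuant `q_n(a_1,…,a_n)` of a word, via `q_{-1} = 0`, `q_0 = 1`,
`q_n = a_n q_{n-1} + q_{n-2}` (the pair holds `(q_{k}, q_{k-1})`). -/
def contQ (l : List ℕ) : ℕ :=
  (l.foldl (fun p a => (a * p.1 + p.2, p.1)) ((1 : ℕ), (0 : ℕ))).1

/-- `Σ_{(a_1,…,a_n) ∈ ℕⁿ} B^{-n(3s-1-s²)} q_n(a_1,…,a_n)^{-2s}` as an extended nonnegative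
real number. -/
noncomputable def presSum (B s : ℝ) (n : ℕ) : ℝ≥0∞ :=
  ∑' v : Fin n → ℕ+,
    ENNReal.ofReal (B ^ (-(n : ℝ) * (3 * s - 1 - s ^ 2)) *
      (contQ (List.ofFn fun i => ((v i : ℕ))) : ℝ) ^ (-(2 * s)))

/-- The pressure function `P_B(s) = lim_n (1/n) log presSum B s n ∈ (-∞,∞]`
(the limit exists, hence equals the `limsup`). -/
noncomputable def pressure (B s : ℝ) : EReal :=
  Filter.atTop.limsup fun n : ℕ => (((n : ℝ)⁻¹ : ℝ) : EReal) * ENNReal.log (presSum B s n)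

/-- `s_B = inf {s ≥ 0 : P_B(s) ≤ 0}`. -/
noncomputable def sB (B : ℝ) : ℝ := sInf {s : ℝ | 0 ≤ s ∧ pressure B s ≤ 0}

namespace F2Dim

/-! ### Finite continued fractions and continuants -/

/-- The inverse branch `y ↦ [a_1, …, a_n + y]` of the iterated Gauss map attached to the word
`w = (a_1, …, a_n)`. -/
noncomputable def cfMap (w : List ℕ) (y : ℝ) : ℝ := w.foldr (fun a z => 1 / ((a : ℝ) + z)) y

/-- The pair `(q_n, q_{n-1})` of the last two continuants of a word. -/
def qpair (w : List ℕ) : ℕ × ℕ :=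
  w.foldl (fun p a => (a * p.1 + p.2, p.1)) ((1 : ℕ), (0 : ℕ))

/-- All digits of the word are at least one. -/
def PosW (w : List ℕ) : Prop := ∀ a ∈ w, 1 ≤ a

lemma contQ_eq (w : List ℕ) : contQ w = (qpair w).1 := rfl

@[simp] lemma cfMap_nil (y : ℝ) : cfMap [] y = y := rfl
@[simp] lemma cfMap_cons (a : ℕ) (w : List ℕ) (y : ℝ) :
    cfMap (a :: w) y = 1 / ((a : ℝ) + cfMap w y) := rfl

lemma cfMap_append (u w : List ℕ) (y : ℝ) : cfMap (u ++ w) y = cfMap u (cfMap w y) := by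
  simp [cfMap, List.foldr_append]

lemma qpair_concat (u : List ℕ) (a : ℕ) :
    qpair (u ++ [a]) = (a * (qpair u).1 + (qpair u).2, (qpair u).1) := by
  simp [qpair, List.foldl_append]

lemma PosW.of_append {u w : List ℕ} (h : PosW (u ++ w)) : PosW u ∧ PosW w :=
  ⟨fun a ha => h a (by simp [ha]), fun a ha => h a (by simp [ha])⟩

lemma PosW.append {u w : List ℕ} (hu : PosW u) (hw : PosW w) : PosW (u ++ w) := by
  intro a ha
  rcases List.mem_append.1 ha with h | h
  exacts [hu a h, hw a h]

lemma PosW.tail {a : ℕ} {w : List ℕ} (h : PosW (a :: w)) : PosW w :=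
  fun b hb => h b (by simp [hb])

lemma PosW.head {a : ℕ} {w : List ℕ} (h : PosW (a :: w)) : (1 : ℝ) ≤ a := by
  exact_mod_cast h a (by simp)

lemma cfMap_mem {w : List ℕ} (hw : PosW w) {y : ℝ} (hy : y ∈ Set.Icc (0 : ℝ) 1) :
    cfMap w y ∈ Set.Icc (0 : ℝ) 1 := by
  induction w with
  | nil => simpa using hy
  | cons a w ih =>
    have h := ih hw.tail
    have ha := hw.head
    simp only [cfMap_cons]
    have h0 := h.1
    constructor
    · positivity
    · rw [div_le_one (by linarith)]; linarith

lemma cfMap_pos {w : List ℕ} (hw : PosW w) {y : ℝ} (hy : y ∈ Set.Icc (0 : ℝ) 1)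
    (hne : w ≠ []) : 0 < cfMap w y := by
  cases w with
  | nil => exact absurd rfl hne
  | cons a w =>
    have h := cfMap_mem hw.tail hy
    have ha := hw.head
    have h0 := h.1
    simp only [cfMap_cons]
    positivity

lemma qpair_bounds {w : List ℕ} (hw : PosW w) :
    1 ≤ (qpair w).1 ∧ (qpair w).2 ≤ (qpair w).1 := by
  induction w using List.reverseRecOn with
  | nil => simp [qpair]
  | append_singleton u a ih =>
    obtain ⟨h1, h2⟩ := ih hw.of_append.1
    have ha : 1 ≤ a := hw.of_append.2 a (by simp)
    rw [qpair_concat]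
    constructor <;> simp only <;> nlinarith

lemma one_le_contQ {w : List ℕ} (hw : PosW w) : 1 ≤ contQ w := (qpair_bounds hw).1

lemma contQ_pos {w : List ℕ} (hw : PosW w) : (0 : ℝ) < contQ w := by
  exact_mod_cast one_le_contQ hw

/-- Exponential growth of continuants, in the form `2^n ≤ 2 q_n²`. -/
lemma two_pow_le {w : List ℕ} (hw : PosW w) : 2 ^ w.length ≤ 2 * contQ w ^ 2 := by
  have key : ∀ w : List ℕ, PosW w → w ≠ [] →
      2 ^ w.length ≤ 2 * ((qpair w).1 * (qpair w).2) := by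
    intro w
    induction w using List.reverseRecOn with
    | nil => intro _ h; exact absurd rfl h
    | append_singleton u a ih =>
      intro hw _
      have ha : 1 ≤ a := hw.of_append.2 a (by simp)
      obtain ⟨h1, h2⟩ := qpair_bounds hw.of_append.1
      rw [qpair_concat]
      simp only [List.length_append, List.length_singleton, pow_succ]
      by_cases hu : u = []
      · subst hu; simp [qpair]; omega
      · have := ih hw.of_append.1 hu
        have h3 : (qpair u).1 ≤ a * (qpair u).1 := Nat.le_mul_of_pos_left _ ha
        nlinarith
  by_cases h : w = []
  · subst h; simp [contQ]
  · have h1 := key w hw h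
    have h2 := (qpair_bounds hw).2
    rw [contQ_eq]
    nlinarith

lemma contQ_append_le {u w : List ℕ} (hu : PosW u) (hw : PosW w) :
    contQ (u ++ w) ≤ 2 * contQ u * contQ w := by
  obtain ⟨h1, h2⟩ := qpair_bounds hu
  have key : ∀ w : List ℕ, PosW w → w ≠ [] →
      (qpair (u ++ w)).1 ≤ 2 * (qpair u).1 * (qpair w).1 ∧
      (qpair (u ++ w)).2 ≤ 2 * (qpair u).1 * (qpair w).2 := by
    intro w
    induction w using List.reverseRecOn with
    | nil => intro _ h; exact absurd rfl h
    | append_singleton v a ih =>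
      intro hw _
      have ha : 1 ≤ a := hw.of_append.2 a (by simp)
      rw [← List.append_assoc, qpair_concat, qpair_concat]
      by_cases hv : v = []
      · subst hv
        simp [qpair] at *
        constructor <;> nlinarith
      · obtain ⟨i1, i2⟩ := ih hw.of_append.1 hv
        refine ⟨?_, i1⟩
        simp only
        nlinarith
  by_cases h : w = []
  · subst h; simp only [List.append_nil, contQ_eq]; simp [qpair]; nlinarith
  · exact (key w hw h).1

/-- The branch of a word is a Möbius map of determinant `±1` with denominator
`q_n + y q_{n-1}`, which gives the distance between two image points exactly. -/
lemma abs_cfMap_sub {w : List ℕ} (hw : PosW w) {y z : ℝ} (hy : 0 ≤ y) (hz : 0 ≤ z) :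
    |cfMap w y - cfMap w z| = |y - z| /
      ((((qpair w).1 : ℝ) + y * (qpair w).2) * (((qpair w).1 : ℝ) + z * (qpair w).2)) := by
  induction w using List.reverseRecOn generalizing y z with
  | nil => simp [qpair]
  | append_singleton u a ih =>
    have ha : (1 : ℝ) ≤ a := by exact_mod_cast hw.of_append.2 a (by simp)
    have h1 : (1 : ℝ) ≤ (qpair u).1 := by exact_mod_cast (qpair_bounds hw.of_append.1).1
    rw [cfMap_append, cfMap_append, cfMap_cons, cfMap_cons, cfMap_nil, cfMap_nil,
      ih hw.of_append.1 (by positivity) (by positivity), qpair_concat]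
    have e : 1 / ((a : ℝ) + y) - 1 / (a + z) = (z - y) / ((a + y) * (a + z)) := by
      field_simp; ring
    have p1 : 0 < (a : ℝ) + y := by linarith
    have p2 : 0 < (a : ℝ) + z := by linarith
    rw [e, abs_div, abs_of_pos (mul_pos p1 p2), abs_sub_comm z y]
    push_cast
    set q : ℝ := ((qpair u).1 : ℝ)
    set q' : ℝ := ((qpair u).2 : ℝ)
    have h2 : 0 ≤ q' := by positivity
    have e1 : q + 1 / (a + y) * q' = ((a * q + q') + y * q) / (a + y) := by field_simp; ring
    have e2 : q + 1 / (a + z) * q' = ((a * q + q') + z * q) / (a + z) := by field_simp; ring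
    have p3 : 0 < (a * q + q') + y * q := by positivity
    have p4 : 0 < (a * q + q') + z * q := by positivity
    rw [e1, e2]
    field_simp

lemma abs_cfMap_sub_le {w : List ℕ} (hw : PosW w) {y z : ℝ} (hy : y ∈ Set.Icc (0 : ℝ) 1)
    (hz : z ∈ Set.Icc (0 : ℝ) 1) :
    |cfMap w y - cfMap w z| ≤ |y - z| / (contQ w : ℝ) ^ 2 := by
  rw [abs_cfMap_sub hw hy.1 hz.1]
  have h1 := contQ_pos hw
  have hy0 := hy.1
  have hz0 := hz.1
  rw [← contQ_eq, sq]
  gcongr <;> simp <;> positivity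

lemma le_abs_cfMap_sub {w : List ℕ} (hw : PosW w) {y z : ℝ} (hy : y ∈ Set.Icc (0 : ℝ) 1)
    (hz : z ∈ Set.Icc (0 : ℝ) 1) :
    |y - z| ≤ 4 * (contQ w : ℝ) ^ 2 * |cfMap w y - cfMap w z| := by
  rw [abs_cfMap_sub hw hy.1 hz.1, ← contQ_eq]
  have h1 := contQ_pos hw
  have h2 : ((qpair w).2 : ℝ) ≤ contQ w := by exact_mod_cast (qpair_bounds hw).2
  have h3 : (0 : ℝ) ≤ (qpair w).2 := by positivity
  obtain ⟨hy0, hy1⟩ := hy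
  obtain ⟨hz0, hz1⟩ := hz
  have a1 : (contQ w : ℝ) + y * (qpair w).2 ≤ 2 * contQ w := by nlinarith
  have a2 : (contQ w : ℝ) + z * (qpair w).2 ≤ 2 * contQ w := by nlinarith
  have p1 : 0 < (contQ w : ℝ) + y * (qpair w).2 := by positivity
  have p2 : 0 < (contQ w : ℝ) + z * (qpair w).2 := by positivity
  have hprod : ((contQ w : ℝ) + y * (qpair w).2) * (contQ w + z * (qpair w).2) ≤
      4 * (contQ w : ℝ) ^ 2 := by
    calc _ ≤ (2 * (contQ w : ℝ)) * (2 * contQ w) := by gcongr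
      _ = _ := by ring
  rw [mul_div_assoc', le_div_iff₀ (by positivity), mul_comm]
  exact mul_le_mul_of_nonneg_right hprod (abs_nonneg _)

/-! ### Points coded by sequences of blocks -/

/-- The concatenation of the first `j` blocks of `ω`. -/
def pre (ω : ℕ → List ℕ) : ℕ → List ℕ
  | 0 => []
  | j + 1 => pre ω j ++ ω j

/-- The block sequence `ω` with its first `j` blocks dropped. -/
def shift (j : ℕ) (ω : ℕ → List ℕ) : ℕ → List ℕ := fun n => ω (j + n)

/-- Every block is a nonempty word of positive digits. -/
def Valid (ω : ℕ → List ℕ) : Prop := ∀ i, ω i ≠ [] ∧ PosW (ω i)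

/-- The infinite continued fraction whose digits are the concatenated blocks of `ω`. The limit
exists for valid `ω`; see `Valid.tendsto`. -/
noncomputable def cfLim (ω : ℕ → List ℕ) : ℝ := limUnder atTop fun n => cfMap (pre ω n) 0

lemma pre_add (ω : ℕ → List ℕ) (j n : ℕ) : pre ω (j + n) = pre ω j ++ pre (shift j ω) n := by
  induction n with
  | zero => simp [pre]
  | succ n ih => rw [← add_assoc, pre, ih, pre, List.append_assoc]; rfl

lemma Valid.shift {ω : ℕ → List ℕ} (h : Valid ω) (j : ℕ) : Valid (shift j ω) :=
  fun i => h (j + i)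

lemma Valid.pre {ω : ℕ → List ℕ} (h : Valid ω) (j : ℕ) : PosW (pre ω j) := by
  induction j with
  | zero => intro a ha; simp [F2Dim.pre] at ha
  | succ j ih => exact ih.append (h j).2

lemma Valid.le_length {ω : ℕ → List ℕ} (h : Valid ω) (j : ℕ) : j ≤ (F2Dim.pre ω j).length := by
  induction j with
  | zero => simp
  | succ j ih =>
    have := List.length_pos_of_ne_nil (h j).1
    simp only [F2Dim.pre, List.length_append]; omega

lemma Valid.inv_sq_le {ω : ℕ → List ℕ} (h : Valid ω) (j : ℕ) :
    1 / (contQ (F2Dim.pre ω j) : ℝ) ^ 2 ≤ 2 * (1 / 2) ^ j := by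
  have h1 := two_pow_le (h.pre j)
  have h2 : 2 ^ j ≤ 2 * contQ (F2Dim.pre ω j) ^ 2 :=
    (Nat.pow_le_pow_right (by norm_num) (h.le_length j)).trans h1
  have h3 : (2 : ℝ) ^ j ≤ 2 * (contQ (F2Dim.pre ω j) : ℝ) ^ 2 := by exact_mod_cast h2
  have h4 := contQ_pos (h.pre j)
  rw [one_div_pow, mul_one_div, div_le_div_iff₀ (by positivity) (by positivity)]
  linarith

lemma zero_mem_Icc : (0 : ℝ) ∈ Set.Icc (0 : ℝ) 1 := by simp

lemma Valid.tendsto {ω : ℕ → List ℕ} (h : Valid ω) :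
    Tendsto (fun n => cfMap (F2Dim.pre ω n) 0) atTop (nhds (cfLim ω)) := by
  apply CauchySeq.tendsto_limUnder
  apply cauchySeq_of_le_geometric (1 / 2) 2 (by norm_num)
  intro n
  refine le_trans ?_ (h.inv_sq_le n)
  rw [F2Dim.pre, cfMap_append, Real.dist_eq]
  have hm := cfMap_mem (h n).2 zero_mem_Icc
  refine (abs_cfMap_sub_le (h.pre n) zero_mem_Icc hm).trans ?_
  have : |0 - cfMap (ω n) 0| ≤ 1 := by
    rw [zero_sub, abs_neg, abs_of_nonneg hm.1]; exact hm.2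
  gcongr

lemma Valid.cfLim_mem_Icc {ω : ℕ → List ℕ} (h : Valid ω) : cfLim ω ∈ Set.Icc (0 : ℝ) 1 :=
  isClosed_Icc.mem_of_tendsto h.tendsto
    (Eventually.of_forall fun n => cfMap_mem (h.pre n) zero_mem_Icc)

lemma Valid.cfLim_eq {ω : ℕ → List ℕ} (h : Valid ω) (j : ℕ) :
    cfLim ω = cfMap (F2Dim.pre ω j) (cfLim (F2Dim.shift j ω)) := by
  have hs := h.shift j
  have h1 : Tendsto (fun n => cfMap (F2Dim.pre ω (j + n)) 0) atTop (nhds (cfLim ω)) := by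
    have := h.tendsto.comp (tendsto_add_atTop_nat j)
    simpa [Function.comp_def, add_comm] using this
  refine tendsto_nhds_unique h1 ?_
  rw [tendsto_iff_dist_tendsto_zero]
  have h2 := tendsto_iff_dist_tendsto_zero.1 hs.tendsto
  refine squeeze_zero (fun _ => dist_nonneg) (fun n => ?_) h2
  rw [pre_add, cfMap_append, Real.dist_eq, Real.dist_eq]
  refine (abs_cfMap_sub_le (h.pre j) (cfMap_mem (hs.pre n) zero_mem_Icc) hs.cfLim_mem_Icc).trans ?_
  refine div_le_self (abs_nonneg _) ?_
  have : (1 : ℝ) ≤ contQ (F2Dim.pre ω j) := by exact_mod_cast one_le_contQ (h.pre j)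
  exact one_le_pow₀ this

lemma Valid.cfLim_eq_one {ω : ℕ → List ℕ} (h : Valid ω) (j : ℕ) :
    cfLim (F2Dim.shift j ω) = cfMap (ω j) (cfLim (F2Dim.shift (j + 1) ω)) := by
  have := (h.shift j).cfLim_eq 1
  have e : F2Dim.shift 1 (F2Dim.shift j ω) = F2Dim.shift (j + 1) ω := by
    funext i; simp [F2Dim.shift, add_assoc]
  rw [e] at this
  simpa [F2Dim.pre, F2Dim.shift] using this

lemma Valid.cfLim_pos {ω : ℕ → List ℕ} (h : Valid ω) : 0 < cfLim ω := by
  rw [h.cfLim_eq 1]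
  refine cfMap_pos (h.pre 1) (h.shift 1).cfLim_mem_Icc ?_
  have := h.le_length 1
  intro hh
  simp [hh] at this

lemma cfMap_mem_Ioo {w : List ℕ} (hw : PosW w) {y : ℝ} (hy : y ∈ Set.Ioo (0 : ℝ) 1) :
    cfMap w y ∈ Set.Ioo (0 : ℝ) 1 := by
  induction w with
  | nil => simpa using hy
  | cons a w ih =>
    have h := ih hw.tail
    have ha := hw.head
    simp only [cfMap_cons]
    have h0 := h.1
    constructor
    · positivity
    · rw [div_lt_one (by linarith)]; linarith

lemma Valid.cfLim_mem {ω : ℕ → List ℕ} (h : Valid ω) : cfLim ω ∈ Set.Ioo (0 : ℝ) 1 := by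
  refine ⟨h.cfLim_pos, ?_⟩
  have h1 := h.cfLim_eq_one 0
  have h0 : F2Dim.shift 0 ω = ω := by funext i; simp [F2Dim.shift]
  rw [h0] at h1
  have hp := (h.shift 1).cfLim_pos
  have hm := (h.shift 1).cfLim_mem_Icc
  obtain ⟨hne, hpos⟩ := h 0
  rw [h1]
  cases hw : ω 0 with
  | nil => exact absurd hw hne
  | cons a w =>
    rw [hw] at hpos
    have ha := hpos.head
    have hz : 0 < cfMap w (cfLim (F2Dim.shift 1 ω)) := by
      by_cases hwn : w = []
      · subst hwn; simpa using hp
      · exact cfMap_pos hpos.tail hm hwn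
    rw [cfMap_cons, zero_add, div_lt_one (by linarith)]
    linarith

/-! ### Irrationality -/

/-- If `1 / (a + z)` is rational with denominator at most `n + 1`, then `z` is rational with
denominator at most `n`. -/
lemma descent_one {a : ℕ} {z : ℝ} (ha : 1 ≤ a) (hz : z ∈ Set.Ioo (0 : ℝ) 1) {n : ℕ}
    (h : ∃ q : ℕ, 0 < q ∧ q ≤ n + 1 ∧ ∃ p : ℤ, 1 / ((a : ℝ) + z) * q = p) :
    ∃ q : ℕ, 0 < q ∧ q ≤ n ∧ ∃ p : ℤ, z * q = p := by
  obtain ⟨q, hq, hqn, p, hp⟩ := h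
  have ha' : (1 : ℝ) ≤ a := by exact_mod_cast ha
  have hz0 := hz.1
  have hq' : (0 : ℝ) < q := by exact_mod_cast hq
  have e : (q : ℝ) = p * (a + z) := by rw [← hp]; field_simp
  have hp0 : (0 : ℝ) < p := by rw [← hp]; positivity
  have hp1 : (p : ℝ) < q := by rw [e]; nlinarith
  have hp0' : 0 < p := by exact_mod_cast hp0
  lift p to ℕ using hp0'.le
  push_cast at hp1 e
  refine ⟨p, by exact_mod_cast hp0', ?_, q - a * p, ?_⟩
  · have : p < q := by exact_mod_cast hp1
    omega
  · push_cast; linarith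

lemma descent {w : List ℕ} (hw : PosW w) {y : ℝ} (hy : y ∈ Set.Ioo (0 : ℝ) 1)
    (hne : w ≠ []) {n : ℕ}
    (h : ∃ q : ℕ, 0 < q ∧ q ≤ n + 1 ∧ ∃ p : ℤ, cfMap w y * q = p) :
    ∃ q : ℕ, 0 < q ∧ q ≤ n ∧ ∃ p : ℤ, y * q = p := by
  induction w generalizing n with
  | nil => exact absurd rfl hne
  | cons a w ih =>
    have h1 := descent_one (hw a (by simp)) (cfMap_mem_Ioo hw.tail hy) h
    by_cases hwn : w = []
    · subst hwn; simpa using h1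
    · obtain ⟨q, h0, h2, h3⟩ := h1
      exact ih hw.tail hwn ⟨q, h0, by omega, h3⟩

lemma Valid.irrational {ω : ℕ → List ℕ} (h : Valid ω) : Irrational (cfLim ω) := by
  have key : ∀ n : ℕ, ∀ j : ℕ,
      ¬ ∃ q : ℕ, 0 < q ∧ q ≤ n ∧ ∃ p : ℤ, cfLim (F2Dim.shift j ω) * q = p := by
    intro n
    induction n with
    | zero => rintro j ⟨q, h1, h2, -⟩; omega
    | succ n ih =>
      intro j hj
      rw [h.cfLim_eq_one j] at hj
      exact ih (j + 1) (descent (h j).2 (h.shift (j + 1)).cfLim_mem (h j).1 hj)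
  rintro ⟨r, hr⟩
  refine key r.den 0 ⟨r.den, r.pos, le_rfl, r.num, ?_⟩
  have h0 : F2Dim.shift 0 ω = ω := by funext i; simp [F2Dim.shift]
  rw [h0, ← hr]
  exact_mod_cast Rat.mul_den_eq_num r

/-! ### Partial quotients -/

lemma floor_inv {a : ℕ} {z : ℝ} (hz : z ∈ Set.Ioo (0 : ℝ) 1) :
    ⌊1 / (1 / ((a : ℝ) + z))⌋₊ = a := by
  have := hz.1
  have := hz.2
  rw [one_div_one_div, Nat.floor_eq_iff (by positivity)]
  constructor <;> linarith

lemma gaussMap_inv {a : ℕ} {z : ℝ} (hz : z ∈ Set.Ioo (0 : ℝ) 1) :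
    gaussMap (1 / ((a : ℝ) + z)) = z := by
  have h1 := hz.1
  have h2 := hz.2
  have : ⌊(a : ℝ) + z⌋ = (a : ℤ) := by
    rw [Int.floor_eq_iff]; push_cast; constructor <;> linarith
  rw [gaussMap, one_div_one_div, this]
  push_cast; ring

lemma gaussMap_iterate {w : List ℕ} (hw : PosW w) {y : ℝ} (hy : y ∈ Set.Ioo (0 : ℝ) 1) :
    gaussMap^[w.length] (cfMap w y) = y := by
  induction w with
  | nil => simp
  | cons a w ih =>
    rw [List.length_cons, Function.iterate_succ_apply, cfMap_cons,
      gaussMap_inv (cfMap_mem_Ioo hw.tail hy), ih hw.tail]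

lemma Valid.pq_eq {ω : ℕ → List ℕ} (h : Valid ω) {j a : ℕ} (ha : ω j = [a]) :
    pq (cfLim ω) ((F2Dim.pre ω j).length + 1) = a := by
  rw [pq, Nat.add_sub_cancel, h.cfLim_eq j,
    gaussMap_iterate (h.pre j) (h.shift j).cfLim_mem, h.cfLim_eq_one j, ha]
  exact floor_inv (h.shift (j + 1)).cfLim_mem

lemma Valid.mem_F2 {ω : ℕ → List ℕ} (h : Valid ω) {B : ℝ}
    (hinf : ∀ m : ℕ, ∃ j ≥ m, ∃ a b c : ℕ, ω j = [a] ∧ ω (j + 1) = [b] ∧ ω (j + 2) = [c] ∧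
      B ^ ((F2Dim.pre ω j).length + 2) ≤ (a : ℝ) * b ∧
      B ^ ((F2Dim.pre ω j).length + 2) ≤ (b : ℝ) * c) :
    cfLim ω ∈ F2 fun n : ℕ => B ^ n := by
  refine ⟨h.cfLim_mem, h.irrational, ?_⟩
  rw [Set.infinite_iff_exists_gt]
  intro m
  obtain ⟨j, hj, a, b, c, ha, hb, hc, h1, h2⟩ := hinf m
  have la := h.pq_eq ha
  have lb := h.pq_eq hb
  have lc := h.pq_eq hc
  have e1 : (F2Dim.pre ω (j + 1)).length = (F2Dim.pre ω j).length + 1 := by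
    simp [F2Dim.pre, ha]
  have e2 : (F2Dim.pre ω (j + 2)).length = (F2Dim.pre ω j).length + 2 := by
    simp [F2Dim.pre, ha, hb]
  have hl := h.le_length j
  rw [e1] at lb
  rw [e2] at lc
  set t := (F2Dim.pre ω j).length
  refine ⟨t + 2, ⟨t + 1, t + 2, by omega, by omega, by omega, le_rfl, by omega, ?_, ?_⟩, by omega⟩
  · rw [la, show t + 1 + 1 = t + 1 + 1 from rfl, lb]; exact h1
  · rw [show t + 2 = t + 1 + 1 from rfl, lb, show t + 1 + 1 + 1 = t + 2 + 1 from rfl, lc]; exact h2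

/-! ### Mass distribution for independent blocks -/

/-- The set of words is countable and carries the discrete sigma-algebra. -/
instance instMeasurableSpaceWord : MeasurableSpace (List ℕ) := ⊤

lemma measurable_pre (n : ℕ) : Measurable fun ω : ℕ → List ℕ => pre ω n := by
  induction n with
  | zero => exact measurable_const
  | succ n ih =>
    have h : Measurable fun p : List ℕ × List ℕ => p.1 ++ p.2 := Measurable.of_discrete
    exact h.comp (ih.prodMk (measurable_pi_apply n))

lemma measurable_approx (n : ℕ) : Measurable fun ω : ℕ → List ℕ => cfMap (pre ω n) 0 := by
  have h : Measurable fun w : List ℕ => cfMap w 0 := Measurable.of_discrete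
  exact h.comp (measurable_pre n)

section Mass

variable {s : ℝ} {P : ℕ → Measure (List ℕ)}
  {S : ℕ → Set (List ℕ)} {G H : ℕ → ℝ} {D : ℝ}

/-- The mass of the cylinder of the first `j` blocks, compared with `q^{-2s}`. The factor `4` per
block comes from `q(uw) ≤ 2 q(u) q(w)`. -/
lemma mass_le (hs1 : s ≤ 1) (hval : ∀ i, ∀ w ∈ S i, w ≠ [] ∧ PosW w) (hs0 : 0 < s)
    (hG : ∀ i, ∀ w ∈ S i, (P i).real {w} * (contQ w : ℝ) ^ (2 * s) ≤ G i)
    {ω : ℕ → List ℕ} (hω : ∀ i, ω i ∈ S i) (j : ℕ) :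
    (∏ i ∈ Finset.range j, (P i).real {ω i}) * (contQ (pre ω j) : ℝ) ^ (2 * s) ≤
      ∏ i ∈ Finset.range j, 4 * G i := by
  have hv : Valid ω := fun i => hval i _ (hω i)
  induction j with
  | zero => simp [pre, contQ]
  | succ j ih =>
    rw [Finset.prod_range_succ, Finset.prod_range_succ, pre]
    set m := ∏ i ∈ Finset.range j, (P i).real {ω i} with hm
    have hm0 : 0 ≤ m := Finset.prod_nonneg fun i _ => measureReal_nonneg
    set Q : ℝ := (contQ (pre ω j) : ℝ)
    set q : ℝ := (contQ (ω j) : ℝ) with hq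
    have hQ : 0 < Q := contQ_pos (hv.pre j)
    have hq0 : 0 < q := contQ_pos (hv j).2
    have h1 : (contQ (pre ω j ++ ω j) : ℝ) ≤ 2 * Q * q := by
      have := contQ_append_le (hv.pre j) (hv j).2
      have h' : (contQ (pre ω j ++ ω j) : ℝ) ≤
          ((2 * contQ (pre ω j) * contQ (ω j) : ℕ) : ℝ) := by exact_mod_cast this
      push_cast at h'
      exact h'
    have h2 : (contQ (pre ω j ++ ω j) : ℝ) ^ (2 * s) ≤ 4 * (Q ^ (2 * s) * q ^ (2 * s)) := by
      calc _ ≤ (2 * Q * q) ^ (2 * s) := by gcongr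
        _ = 2 ^ (2 * s) * (Q ^ (2 * s) * q ^ (2 * s)) := by
          rw [Real.mul_rpow (by positivity) hq0.le, Real.mul_rpow (by norm_num) hQ.le]; ring
        _ ≤ _ := by
          gcongr
          calc (2 : ℝ) ^ (2 * s) ≤ 2 ^ (2 : ℝ) :=
                Real.rpow_le_rpow_of_exponent_le (by norm_num) (by linarith)
            _ = 4 := by norm_num
    have h3 := hG j _ (hω j)
    have hp0 : 0 ≤ (P j).real {ω j} := measureReal_nonneg
    calc m * (P j).real {ω j} * (contQ (pre ω j ++ ω j) : ℝ) ^ (2 * s)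
        ≤ m * (P j).real {ω j} * (4 * (Q ^ (2 * s) * q ^ (2 * s))) := by gcongr
      _ = (m * Q ^ (2 * s)) * (4 * ((P j).real {ω j} * q ^ (2 * s))) := by ring
      _ ≤ (∏ i ∈ Finset.range j, 4 * G i) * (4 * G j) := by
          apply mul_le_mul ih _ (by positivity) (le_trans (by positivity) ih)
          gcongr

variable [∀ i, IsProbabilityMeasure (P i)]

lemma ae_mem (hS : ∀ i, P i (S i)ᶜ = 0) :
    ∀ᵐ ω ∂(Measure.infinitePi P), ∀ i, ω i ∈ S i := by
  rw [ae_all_iff]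
  intro i
  have h := (measurePreserving_eval_infinitePi P i).quasiMeasurePreserving
  exact h.ae (p := fun w => w ∈ S i) (hS i)

/-- Balls of radius `d` around a coded point have mass at most `4 D d^s`. Let `j` be the first block
at which some point of the ball differs from the centre: after rescaling by the branch of the
first `j` blocks, the mass is estimated by `hblock`. If there is no such block, the ball has
mass zero. -/
lemma ball_le (hs1 : s ≤ 1) (hs0 : 0 < s) (hval : ∀ i, ∀ w ∈ S i, w ≠ [] ∧ PosW w)
    (hG : ∀ i, ∀ w ∈ S i, (P i).real {w} * (contQ w : ℝ) ^ (2 * s) ≤ G i)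
    (hblock : ∀ i, ∀ ω ω' : ℕ → List ℕ, (∀ k, ω k ∈ S k) → (∀ k, ω' k ∈ S k) → ω i ≠ ω' i →
      ∀ r : ℝ, |cfLim (shift i ω) - cfLim (shift i ω')| ≤ r →
      (P i).real {w | ∃ ω'' : ℕ → List ℕ, (∀ k, ω'' k ∈ S k) ∧ ω'' i = w ∧
        |cfLim (shift i ω) - cfLim (shift i ω'')| ≤ r} ≤ H i * r ^ s)
    (hD : ∀ j, (∏ i ∈ Finset.range j, 4 * G i) ≤ D)
    (hDH : ∀ j, (∏ i ∈ Finset.range j, 4 * G i) * H j ≤ D)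
    {ω : ℕ → List ℕ} (hω : ∀ i, ω i ∈ S i) {d : ℝ} (hd : 0 ≤ d) :
    (Measure.infinitePi P).real {ω' | (∀ i, ω' i ∈ S i) ∧ |cfLim ω - cfLim ω'| ≤ d} ≤
      4 * D * d ^ s := by
  have hv : Valid ω := fun i => hval i _ (hω i)
  have hD0 : 0 ≤ D := le_trans (by simp) (hD 0)
  set V : Set (ℕ → List ℕ) := {ω' | (∀ i, ω' i ∈ S i) ∧ |cfLim ω - cfLim ω'| ≤ d} with hV
  by_cases hex : ∃ i, ∃ ω' ∈ V, ω i ≠ ω' i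
  · classical
    set j := Nat.find hex with hj
    obtain ⟨ω', hω', hne⟩ := Nat.find_spec hex
    have hmin : ∀ i < j, ∀ ω'' ∈ V, ω'' i = ω i := by
      intro i hi ω'' h''
      by_contra hcon
      exact Nat.find_min hex hi ⟨ω'', h'', fun h => hcon h.symm⟩
    set Q : ℝ := (contQ (pre ω j) : ℝ) with hQ
    have hQ0 : 0 < Q := contQ_pos (hv.pre j)
    have hr : ∀ ω'' ∈ V, |cfLim (shift j ω) - cfLim (shift j ω'')| ≤ 4 * Q ^ 2 * d := by
      intro ω'' h''
      have hv'' : Valid ω'' := fun i => hval i _ (h''.1 i)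
      have hpre : ∀ k ≤ j, pre ω'' k = pre ω k := by
        intro k
        induction k with
        | zero => intro _; rfl
        | succ k ih => intro hk; rw [pre, pre, ih (by omega), hmin k (by omega) ω'' h'']
      have h1 := le_abs_cfMap_sub (hv.pre j) (hv.shift j).cfLim_mem_Icc
        (hv''.shift j).cfLim_mem_Icc
      rw [← hv.cfLim_eq j, ← hpre j le_rfl, ← hv''.cfLim_eq j, hpre j le_rfl] at h1
      refine h1.trans ?_
      have := h''.2
      gcongr
    set T : Set (List ℕ) := {w | ∃ ω'' : ℕ → List ℕ, (∀ k, ω'' k ∈ S k) ∧ ω'' j = w ∧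
        |cfLim (shift j ω) - cfLim (shift j ω'')| ≤ 4 * Q ^ 2 * d} with hT
    have hb := hblock j ω ω' hω hω'.1 hne (4 * Q ^ 2 * d) (hr ω' hω')
    have hsub : V ⊆ Set.pi (Finset.range (j + 1)) (fun i => if i < j then {ω i} else T) := by
      intro ω'' h'' i hi
      have hi' : i < j + 1 := by simpa using hi
      by_cases hij : i < j
      · simp only [hij, if_true]; exact hmin i hij ω'' h''
      · have : i = j := by omega
        subst this
        simp only [hij, if_false]
        exact ⟨ω'', h''.1, rfl, hr ω'' h''⟩
    have hm : (Measure.infinitePi P).real V ≤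
        (∏ i ∈ Finset.range j, (P i).real {ω i}) * (P j).real T := by
      refine (measureReal_mono hsub).trans ?_
      rw [measureReal_def, Measure.infinitePi_pi _ (fun i _ => MeasurableSet.of_discrete),
        Finset.prod_range_succ, ENNReal.toReal_mul, ENNReal.toReal_prod]
      simp only [lt_irrefl, if_false]
      refine le_of_eq ?_
      congr 1
      refine Finset.prod_congr rfl fun i hi => ?_
      rw [if_pos (Finset.mem_range.1 hi)]; rfl
    refine hm.trans ?_
    have hmass := mass_le (P := P) hs1 hval hs0 hG hω j
    set m := ∏ i ∈ Finset.range j, (P i).real {ω i} with hmdef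
    have hm0 : 0 ≤ m := Finset.prod_nonneg fun i _ => measureReal_nonneg
    have hH0 : 0 ≤ H j * (4 * Q ^ 2 * d) ^ s := le_trans measureReal_nonneg hb
    have e : (4 * Q ^ 2 * d) ^ s = 4 ^ s * Q ^ (2 * s) * d ^ s := by
      rw [Real.mul_rpow (by positivity) hd, Real.mul_rpow (by norm_num) (by positivity),
        Real.rpow_mul hQ0.le]
      norm_num
    have h4 : (4 : ℝ) ^ s ≤ 4 := by
      simpa using Real.rpow_le_rpow_of_exponent_le (by norm_num : (1 : ℝ) ≤ 4) hs1
    by_cases hHj : 0 ≤ H j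
    · calc m * (P j).real T ≤ m * (H j * (4 * Q ^ 2 * d) ^ s) := by gcongr
        _ = 4 ^ s * ((m * Q ^ (2 * s)) * H j) * d ^ s := by rw [e]; ring
        _ ≤ 4 * ((∏ i ∈ Finset.range j, 4 * G i) * H j) * d ^ s := by gcongr
        _ ≤ 4 * D * d ^ s := by gcongr; exact hDH j
    · have h0 : (4 * Q ^ 2 * d) ^ s = 0 := by
        have : 0 ≤ (4 * Q ^ 2 * d) ^ s := by positivity
        nlinarith
      calc m * (P j).real T ≤ m * (H j * (4 * Q ^ 2 * d) ^ s) := by gcongr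
        _ = 0 := by rw [h0]; ring
        _ ≤ _ := by positivity
  · push Not at hex
    have hle : ∀ j, (Measure.infinitePi P).real V ≤ D * (2 * (1 / 2) ^ j) ^ s := by
      intro j
      have hsub : V ⊆ Set.pi (Finset.range j) (fun i => {ω i}) := by
        intro ω'' h'' i _
        exact (hex i ω'' h'').symm
      refine (measureReal_mono hsub).trans ?_
      rw [measureReal_def, Measure.infinitePi_pi _ (fun i _ => MeasurableSet.of_discrete),
        ENNReal.toReal_prod]
      have hmass := (mass_le (P := P) hs1 hval hs0 hG hω j).trans (hD j)
      have hQ0 : (0 : ℝ) < contQ (pre ω j) := contQ_pos (hv.pre j)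
      set Q : ℝ := (contQ (pre ω j) : ℝ)
      have h2 : (1 / Q ^ 2) ^ s ≤ (2 * (1 / 2) ^ j) ^ s := by
        have := hv.inv_sq_le j
        gcongr
      have h3 : (1 / Q ^ 2) ^ s = 1 / Q ^ (2 * s) := by
        rw [Real.div_rpow (by norm_num) (by positivity), Real.rpow_mul hQ0.le]
        norm_num
      calc _ ≤ D * (1 / Q ^ (2 * s)) := by
            rw [mul_one_div, le_div_iff₀ (by positivity)]; exact hmass
        _ ≤ _ := by rw [← h3]; gcongr
    have hlim : Tendsto (fun j : ℕ => D * (2 * (1 / 2 : ℝ) ^ j) ^ s) atTop (nhds 0) := by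
      have h1 : Tendsto (fun j : ℕ => 2 * (1 / 2 : ℝ) ^ j) atTop (nhds 0) := by
        simpa using (tendsto_pow_atTop_nhds_zero_of_lt_one (r := (1 / 2 : ℝ))
          (by norm_num) (by norm_num)).const_mul 2
      have h2 := h1.rpow_const (p := s) (Or.inr hs0.le)
      rw [Real.zero_rpow hs0.ne'] at h2
      simpa using h2.const_mul D
    have := ge_of_tendsto' hlim hle
    refine this.trans (by positivity)

/-- Lower bound for the dimension of a set containing all points coded by independent blocks with
laws `P i` on `S i`. Here `G i` compares the mass of a block with `q^{-2s}`, and `H i` bounds the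
mass of the block cylinders met by a ball that meets at least two of them. -/
theorem le_dimH_of_blocks (hs1 : s ≤ 1) (hs0 : 0 < s) (hS : ∀ i, P i (S i)ᶜ = 0)
    (hval : ∀ i, ∀ w ∈ S i, w ≠ [] ∧ PosW w)
    (hG : ∀ i, ∀ w ∈ S i, (P i).real {w} * (contQ w : ℝ) ^ (2 * s) ≤ G i)
    (hblock : ∀ i, ∀ ω ω' : ℕ → List ℕ, (∀ k, ω k ∈ S k) → (∀ k, ω' k ∈ S k) → ω i ≠ ω' i →
      ∀ r : ℝ, |cfLim (shift i ω) - cfLim (shift i ω')| ≤ r →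
      (P i).real {w | ∃ ω'' : ℕ → List ℕ, (∀ k, ω'' k ∈ S k) ∧ ω'' i = w ∧
        |cfLim (shift i ω) - cfLim (shift i ω'')| ≤ r} ≤ H i * r ^ s)
    (hD : ∀ j, (∏ i ∈ Finset.range j, 4 * G i) ≤ D)
    (hDH : ∀ j, (∏ i ∈ Finset.range j, 4 * G i) * H j ≤ D)
    {E : Set ℝ} (hE : ∀ ω : ℕ → List ℕ, (∀ k, ω k ∈ S k) → cfLim ω ∈ E) :
    ENNReal.ofReal s ≤ dimH E := by
  set ν := Measure.infinitePi P with hν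
  have hae : ∀ᵐ ω ∂ν, ∀ i, ω i ∈ S i := ae_mem hS
  have hmeas : AEMeasurable cfLim ν := by
    refine aemeasurable_of_tendsto_metrizable_ae atTop
      (fun n => (measurable_approx n).aemeasurable) ?_
    filter_upwards [hae] with ω hω
    exact Valid.tendsto fun i => hval i _ (hω i)
  have hD1 : 1 ≤ D := le_trans (by simp) (hD 0)
  have hC0 : 0 < 4 * D := by linarith
  set c : ℝ≥0∞ := (ENNReal.ofReal (4 * D))⁻¹ with hc
  have hc0 : c ≠ 0 := ENNReal.inv_ne_zero.2 ENNReal.ofReal_ne_top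
  have hball : ∀ U : Set ℝ, (c • ν.map cfLim) U ≤ Metric.ediam U ^ s := by
    intro U
    by_cases htop : Metric.ediam U = ∞
    · rw [htop, ENNReal.top_rpow_of_pos hs0]; exact le_top
    have hU : ν.map cfLim U ≤ ENNReal.ofReal (4 * D) * Metric.ediam U ^ s := by
      refine (measure_mono subset_closure).trans ?_
      rw [Measure.map_apply_of_aemeasurable hmeas isClosed_closure.measurableSet]
      have hsub : ν (cfLim ⁻¹' closure U) =
          ν {ω' | (∀ i, ω' i ∈ S i) ∧ cfLim ω' ∈ closure U} := by
        refine measure_congr ?_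
        filter_upwards [hae] with ω hω
        apply propext
        exact ⟨fun h => ⟨hω, h⟩, fun h => h.2⟩
      rw [hsub]
      rcases Set.eq_empty_or_nonempty {ω' | (∀ i, ω' i ∈ S i) ∧ cfLim ω' ∈ closure U} with
        hem | ⟨ω, hω, hωU⟩
      · rw [hem]; simp
      set d := (Metric.ediam U).toReal with hd
      have hd0 : 0 ≤ d := ENNReal.toReal_nonneg
      have hb := ball_le (P := P) hs1 hs0 hval hG hblock hD hDH hω hd0
      have h1 : ν {ω' | (∀ i, ω' i ∈ S i) ∧ cfLim ω' ∈ closure U} ≤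
          ν {ω' | (∀ i, ω' i ∈ S i) ∧ |cfLim ω - cfLim ω'| ≤ d} := by
        refine measure_mono fun ω' h => ⟨h.1, ?_⟩
        have := Metric.edist_le_ediam_of_mem hωU h.2
        rw [Metric.ediam_closure, edist_dist, Real.dist_eq,
          ENNReal.ofReal_le_iff_le_toReal htop] at this
        exact this
      refine h1.trans ?_
      rw [← ofReal_measureReal]
      refine (ENNReal.ofReal_le_ofReal hb).trans ?_
      rw [ENNReal.ofReal_mul hC0.le, ← ENNReal.ofReal_rpow_of_nonneg hd0 hs0.le, hd,
        ENNReal.ofReal_toReal htop]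
    rw [Measure.smul_apply, smul_eq_mul]
    calc c * ν.map cfLim U ≤ c * (ENNReal.ofReal (4 * D) * Metric.ediam U ^ s) := by gcongr
      _ = Metric.ediam U ^ s := by
        rw [← mul_assoc, hc, ENNReal.inv_mul_cancel (by simpa using hC0)
          ENNReal.ofReal_ne_top, one_mul]
  have hle := Measure.le_hausdorffMeasure s (c • ν.map cfLim) 1 one_pos (fun U _ => hball U)
  have hpos : 0 < (c • ν.map cfLim) E := by
    rw [Measure.smul_apply, smul_eq_mul]
    refine ENNReal.mul_pos hc0 (ne_of_gt ?_)
    refine lt_of_lt_of_le ?_ (Measure.le_map_apply hmeas E)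
    have : ν (cfLim ⁻¹' E) = 1 := by
      rw [← measure_univ (μ := ν)]
      refine measure_congr ?_
      filter_upwards [hae] with ω hω
      apply propext
      exact ⟨fun _ => trivial, fun _ => hE ω hω⟩
    rw [this]; exact one_pos
  have hne : Measure.hausdorffMeasure ((s.toNNReal : NNReal) : ℝ) E ≠ 0 := by
    rw [Real.coe_toNNReal s hs0.le]
    exact (lt_of_lt_of_le hpos (Measure.le_iff'.1 hle E)).ne'
  exact le_dimH_of_hausdorffMeasure_ne_zero hne

end Mass

section Schedule

/-! ### The schedule of words and large digits -/

/-- The exponent `3s - 1 - s²` from the pressure function. -/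
noncomputable def gExp (s : ℝ) : ℝ := 3 * s - 1 - s ^ 2

/-- The state of the construction before a block is chosen. -/
structure Sched where
  /-- The number of digits written so far. -/
  t : ℕ
  /-- The number of digits written when the current triple of large digits was begun. -/
  t0 : ℕ
  /-- The number of large digits of the current triple already written (`0` outside triples). -/
  ph : ℕ
  /-- The product of the factors `fac` of the blocks written so far. -/
  ρ : ℝ

/-- The factor by which a block worsens the bound on mass over length to the power `s`; a block is
encoded by `a = 0` for a word and by the scale `a` of the digit otherwise. -/
noncomputable def fac (s θ : ℝ) (a : ℕ) : ℝ := if a = 0 then θ else 16 * (a : ℝ) ^ (2 * s - 1)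

/-- The condition under which a triple of large digits is begun. The constant `32768 = 32³` absorbs
the factor `32` lost at each of its three digits. -/
def Sched.Trig (B s : ℝ) (σ : Sched) : Prop :=
  σ.ρ * 32768 * (B ^ (σ.t + 2)) ^ gExp s ≤ 1

open Classical in
/-- The scale of the next block: `0` for a word, otherwise `b^{1-s}`, `b^s`, `b^{1-s}` in turn
for the digits of a triple, with `b = B^{t+2}` evaluated at its beginning. -/
noncomputable def Sched.digit (B s : ℝ) (σ : Sched) : ℕ :=
  if σ.ph = 0 then (if σ.Trig B s then ⌈(B ^ (σ.t + 2)) ^ (1 - s)⌉₊ else 0)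
  else if σ.ph = 1 then ⌈(B ^ (σ.t0 + 2)) ^ s⌉₊
  else ⌈(B ^ (σ.t0 + 2)) ^ (1 - s)⌉₊

/-- The state after the block prescribed by `Sched.digit`. -/
noncomputable def Sched.next (B s θ : ℝ) (N : ℕ) (σ : Sched) : Sched where
  t := σ.t + (if σ.digit B s = 0 then N else 1)
  t0 := if σ.ph = 0 then σ.t else σ.t0
  ph := if σ.ph = 0 then (if σ.digit B s = 0 then 0 else 1) else if σ.ph = 1 then 2 else 0
  ρ := σ.ρ * fac s θ (σ.digit B s)

/-- The sequence of states, starting from the empty word. -/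
noncomputable def sched (B s θ : ℝ) (N : ℕ) : ℕ → Sched
  | 0 => ⟨0, 0, 0, 1⟩
  | j + 1 => (sched B s θ N j).next B s θ N

lemma two_le_ceil {y : ℝ} (hy : 1 < y) : 2 ≤ ⌈y⌉₊ := by
  have : 1 < ⌈y⌉₊ := by rw [Nat.lt_ceil]; simpa using hy
  omega

lemma ceil_rpow_le {y e : ℝ} (hy : 1 ≤ y) (he0 : 0 ≤ e) (he1 : e ≤ 1) :
    (⌈y⌉₊ : ℝ) ^ e ≤ 2 * y ^ e := by
  have h : (⌈y⌉₊ : ℝ) ≤ 2 * y := by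
    have := (Nat.ceil_lt_add_one (by linarith : 0 ≤ y)).le
    linarith
  calc (⌈y⌉₊ : ℝ) ^ e ≤ (2 * y) ^ e := by gcongr
    _ = 2 ^ e * y ^ e := Real.mul_rpow (by norm_num) (by linarith)
    _ ≤ 2 * y ^ e := by
      gcongr
      simpa using Real.rpow_le_rpow_of_exponent_le (by norm_num : (1 : ℝ) ≤ 2) he1

/-- The bounds on `ρ` that persist along the schedule, according to the phase. -/
def Sched.Inv (B s : ℝ) (σ : Sched) : Prop :=
  0 < σ.ρ ∧
  (σ.ph = 0 → σ.ρ ≤ 1) ∧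
  (σ.ph = 1 → σ.ρ * 1024 ≤ (B ^ (σ.t0 + 2)) ^ ((1 - s) * (2 * s - 1) - gExp s)) ∧
  (σ.ph = 2 → σ.ρ * 32 ≤ (B ^ (σ.t0 + 2)) ^ (2 * s - 1 - gExp s)) ∧ σ.ph ≤ 2

variable {B s θ : ℝ} {N : ℕ}

lemma fac_pos (hθ : 0 < θ) (a : ℕ) : 0 < fac s θ a := by
  unfold fac
  split_ifs with h
  · exact hθ
  · have : (0 : ℝ) < a := by exact_mod_cast Nat.pos_of_ne_zero h
    positivity

lemma one_lt_pow' (hB : 1 < B) (t : ℕ) : 1 < B ^ (t + 2) := one_lt_pow₀ hB (by omega)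

lemma fac_ceil_le (hs : 1 / 2 < s) (hs1 : s < 1) {y : ℝ} (hy : 1 < y) :
    fac s θ ⌈y⌉₊ ≤ 32 * y ^ (2 * s - 1) := by
  have h2 := two_le_ceil hy
  have h := ceil_rpow_le hy.le (by linarith : 0 ≤ 2 * s - 1) (by linarith)
  rw [fac, if_neg (by omega)]
  linarith

lemma Sched.Inv.next (hB : 1 < B) (hs : 1 / 2 < s) (hs1 : s < 1) (hθ : 0 < θ) (hθ1 : θ ≤ 1)
    {σ : Sched} (h : σ.Inv B s) : (σ.next B s θ N).Inv B s := by
  obtain ⟨h0, hp0, hp1, hp2, hph⟩ := h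
  refine ⟨mul_pos h0 (fac_pos hθ _), ?_⟩
  obtain ⟨t, t0, ph, ρ⟩ := σ
  simp only at h0 hp0 hp1 hp2 hph
  have hb := one_lt_pow' hB t
  have hb0 := one_lt_pow' hB t0
  interval_cases ph
  · by_cases htr : Sched.Trig B s ⟨t, t0, 0, ρ⟩
    · have hy : 1 < (B ^ (t + 2)) ^ (1 - s) := Real.one_lt_rpow hb (by linarith)
      have h2 := two_le_ceil hy
      have hd : Sched.digit B s ⟨t, t0, 0, ρ⟩ = ⌈(B ^ (t + 2)) ^ (1 - s)⌉₊ := by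
        simp [Sched.digit, htr]
      have hne : ⌈(B ^ (t + 2)) ^ (1 - s)⌉₊ ≠ 0 := by omega
      have hf := fac_ceil_le (θ := θ) hs hs1 hy
      unfold Sched.Trig at htr
      simp only [Sched.next, hd, hne, if_true, if_false]
      refine ⟨by simp, fun _ => ?_, by simp, by simp⟩
      simp only at htr
      set b := B ^ (t + 2)
      have hbp : 0 < b := by linarith
      rw [← Real.rpow_mul hbp.le] at hf
      rw [Real.rpow_sub hbp ((1 - s) * (2 * s - 1)) (gExp s), le_div_iff₀ (by positivity)]
      calc ρ * fac s θ ⌈b ^ (1 - s)⌉₊ * 1024 * b ^ gExp s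
          ≤ ρ * (32 * b ^ ((1 - s) * (2 * s - 1))) * 1024 * b ^ gExp s := by gcongr
        _ = (ρ * 32768 * b ^ gExp s) * b ^ ((1 - s) * (2 * s - 1)) := by ring
        _ ≤ 1 * b ^ ((1 - s) * (2 * s - 1)) := by gcongr
        _ = _ := one_mul _
    · have hd : Sched.digit B s ⟨t, t0, 0, ρ⟩ = 0 := by simp [Sched.digit, htr]
      simp only [Sched.next, hd, if_true, fac]
      refine ⟨fun _ => ?_, by simp, by simp, by simp⟩
      have := hp0 rfl
      nlinarith
  · have hy : 1 < (B ^ (t0 + 2)) ^ s := Real.one_lt_rpow hb0 (by linarith)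
    have hd : Sched.digit B s ⟨t, t0, 1, ρ⟩ = ⌈(B ^ (t0 + 2)) ^ s⌉₊ := by simp [Sched.digit]
    have hf := fac_ceil_le (θ := θ) hs hs1 hy
    have hr := hp1 rfl
    simp only [Sched.next, hd]
    refine ⟨by simp, by simp, fun _ => ?_, by simp⟩
    simp only [one_ne_zero, if_false]
    set b := B ^ (t0 + 2)
    have hbp : 0 < b := by linarith
    rw [← Real.rpow_mul hbp.le] at hf
    calc ρ * fac s θ ⌈b ^ s⌉₊ * 32
        ≤ ρ * (32 * b ^ (s * (2 * s - 1))) * 32 := by gcongr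
      _ = ρ * 1024 * b ^ (s * (2 * s - 1)) := by ring
      _ ≤ b ^ ((1 - s) * (2 * s - 1) - gExp s) * b ^ (s * (2 * s - 1)) := by gcongr
      _ = b ^ (2 * s - 1 - gExp s) := by rw [← Real.rpow_add hbp]; congr 1; ring
  · have hy : 1 < (B ^ (t0 + 2)) ^ (1 - s) := Real.one_lt_rpow hb0 (by linarith)
    have hd : Sched.digit B s ⟨t, t0, 2, ρ⟩ = ⌈(B ^ (t0 + 2)) ^ (1 - s)⌉₊ := by
      simp [Sched.digit]
    have hf := fac_ceil_le (θ := θ) hs hs1 hy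
    have hr := hp2 rfl
    simp only [Sched.next, hd]
    refine ⟨fun _ => ?_, by simp, by simp, by simp⟩
    set b := B ^ (t0 + 2)
    have hbp : 0 < b := by linarith
    rw [← Real.rpow_mul hbp.le] at hf
    calc ρ * fac s θ ⌈b ^ (1 - s)⌉₊
        ≤ ρ * (32 * b ^ ((1 - s) * (2 * s - 1))) := by gcongr
      _ = ρ * 32 * b ^ ((1 - s) * (2 * s - 1)) := by ring
      _ ≤ b ^ (2 * s - 1 - gExp s) * b ^ ((1 - s) * (2 * s - 1)) := by gcongr
      _ = b ^ (-(1 - s) ^ 2) := by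
        rw [← Real.rpow_add hbp]; congr 1; unfold gExp; ring
      _ ≤ 1 := Real.rpow_le_one_of_one_le_of_nonpos hb0.le (by nlinarith [sq_nonneg (1 - s)])

/-- The product so far leaves room for the loss `A^s` in the ball estimate at the next block. -/
lemma Sched.Inv.bound (hB : 1 < B) (hs : 1 / 2 < s) (hs1 : s < 1)
    {σ : Sched} (h : σ.Inv B s) :
    σ.ρ * (max (σ.digit B s : ℝ) 1) ^ s ≤ 1 := by
  obtain ⟨h0, hp0, hp1, hp2, hph⟩ := h
  obtain ⟨t, t0, ph, ρ⟩ := σ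
  simp only at h0 hp0 hp1 hp2 hph ⊢
  have hb := one_lt_pow' hB t
  have hb0 := one_lt_pow' hB t0
  have hmax : ∀ {y : ℝ}, 1 < y → max (⌈y⌉₊ : ℝ) 1 = ⌈y⌉₊ := by
    intro y hy
    have := two_le_ceil hy
    apply max_eq_left
    exact_mod_cast (by omega : 1 ≤ ⌈y⌉₊)
  interval_cases ph
  · by_cases htr : Sched.Trig B s ⟨t, t0, 0, ρ⟩
    · have hy : 1 < (B ^ (t + 2)) ^ (1 - s) := Real.one_lt_rpow hb (by linarith)
      have hd : Sched.digit B s ⟨t, t0, 0, ρ⟩ = ⌈(B ^ (t + 2)) ^ (1 - s)⌉₊ := by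
        simp [Sched.digit, htr]
      have hc := ceil_rpow_le hy.le (by linarith : 0 ≤ s) hs1.le
      unfold Sched.Trig at htr
      simp only at htr
      rw [hd, hmax hy]
      set b := B ^ (t + 2)
      have hbp : 0 < b := by linarith
      rw [← Real.rpow_mul hbp.le] at hc
      have hle : b ^ ((1 - s) * s) ≤ b ^ gExp s :=
        Real.rpow_le_rpow_of_exponent_le hb.le (by unfold gExp; nlinarith)
      calc ρ * (⌈b ^ (1 - s)⌉₊ : ℝ) ^ s ≤ ρ * (2 * b ^ gExp s) := by gcongr; linarith
        _ ≤ ρ * 32768 * b ^ gExp s := by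
          have : 0 < ρ * b ^ gExp s := by positivity
          nlinarith
        _ ≤ 1 := htr
    · have hd : Sched.digit B s ⟨t, t0, 0, ρ⟩ = 0 := by simp [Sched.digit, htr]
      rw [hd]
      simpa using hp0 rfl
  · have hy : 1 < (B ^ (t0 + 2)) ^ s := Real.one_lt_rpow hb0 (by linarith)
    have hd : Sched.digit B s ⟨t, t0, 1, ρ⟩ = ⌈(B ^ (t0 + 2)) ^ s⌉₊ := by simp [Sched.digit]
    have hc := ceil_rpow_le hy.le (by linarith : 0 ≤ s) hs1.le
    have hr := hp1 rfl
    rw [hd, hmax hy]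
    set b := B ^ (t0 + 2)
    have hbp : 0 < b := by linarith
    rw [← Real.rpow_mul hbp.le] at hc
    calc ρ * (⌈b ^ s⌉₊ : ℝ) ^ s ≤ ρ * (2 * b ^ (s * s)) := by gcongr
      _ ≤ ρ * 1024 * b ^ (s * s) := by
        have : 0 < ρ * b ^ (s * s) := by positivity
        nlinarith
      _ ≤ b ^ ((1 - s) * (2 * s - 1) - gExp s) * b ^ (s * s) := by gcongr
      _ = b ^ (0 : ℝ) := by rw [← Real.rpow_add hbp]; congr 1; unfold gExp; ring
      _ = 1 := Real.rpow_zero _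
      _ ≤ 1 := le_rfl
  · have hy : 1 < (B ^ (t0 + 2)) ^ (1 - s) := Real.one_lt_rpow hb0 (by linarith)
    have hd : Sched.digit B s ⟨t, t0, 2, ρ⟩ = ⌈(B ^ (t0 + 2)) ^ (1 - s)⌉₊ := by
      simp [Sched.digit]
    have hc := ceil_rpow_le hy.le (by linarith : 0 ≤ s) hs1.le
    have hr := hp2 rfl
    rw [hd, hmax hy]
    set b := B ^ (t0 + 2)
    have hbp : 0 < b := by linarith
    rw [← Real.rpow_mul hbp.le] at hc
    calc ρ * (⌈b ^ (1 - s)⌉₊ : ℝ) ^ s ≤ ρ * (2 * b ^ ((1 - s) * s)) := by gcongr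
      _ ≤ ρ * 32 * b ^ ((1 - s) * s) := by
        have : 0 < ρ * b ^ ((1 - s) * s) := by positivity
        nlinarith
      _ ≤ b ^ (2 * s - 1 - gExp s) * b ^ ((1 - s) * s) := by gcongr
      _ = b ^ (0 : ℝ) := by rw [← Real.rpow_add hbp]; congr 1; unfold gExp; ring
      _ = 1 := Real.rpow_zero _
      _ ≤ 1 := le_rfl

lemma Sched.digit_alt (hB : 1 < B) (hs : 1 / 2 < s) (hs1 : s < 1) (σ : Sched) :
    σ.digit B s = 0 ∨ 2 ≤ σ.digit B s := by
  have h1 : ∀ t, 1 < (B ^ (t + 2)) ^ (1 - s) := fun t =>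
    Real.one_lt_rpow (one_lt_pow' hB t) (by linarith)
  have h2 : ∀ t, 1 < (B ^ (t + 2)) ^ s := fun t =>
    Real.one_lt_rpow (one_lt_pow' hB t) (by linarith)
  unfold Sched.digit
  split_ifs
  exacts [Or.inr (two_le_ceil (h1 _)), Or.inl rfl, Or.inr (two_le_ceil (h2 _)),
    Or.inr (two_le_ceil (h1 _))]

/-- Triples are begun infinitely often: while only words are written, `ρ b^{g(s)}` is at least
halved at each block. -/
lemma exists_trig (hB : 1 < B) (hθ : 0 < θ)
    (hθB : θ ≤ (B ^ N) ^ (-gExp s) / 2) (m : ℕ) :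
    ∃ j ≥ m, (sched B s θ N j).ph = 0 ∧ (sched B s θ N j).Trig B s := by
  have hph : ∃ j ≥ m, (sched B s θ N j).ph = 0 := by
    by_cases h0 : (sched B s θ N m).ph = 0
    · exact ⟨m, le_rfl, h0⟩
    by_cases h1 : (sched B s θ N m).ph = 1
    · exact ⟨m + 2, by omega, by simp [sched, Sched.next, h1]⟩
    · exact ⟨m + 1, by omega, by simp [sched, Sched.next, h1, h0]⟩
  obtain ⟨j, hj, hj0⟩ := hph
  by_contra hcon
  push Not at hcon
  set σ := sched B s θ N j with hσ
  have hall : ∀ k, (sched B s θ N (j + k)).ph = 0 ∧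
      (sched B s θ N (j + k)).t = σ.t + N * k ∧ (sched B s θ N (j + k)).ρ = σ.ρ * θ ^ k := by
    intro k
    induction k with
    | zero => simp [← hσ, hj0]
    | succ k ih =>
      obtain ⟨i1, i2, i3⟩ := ih
      have hnt := hcon (j + k) (by omega) i1
      have hd : (sched B s θ N (j + k)).digit B s = 0 := by simp [Sched.digit, i1, hnt]
      rw [← add_assoc, sched]
      simp only [Sched.next, hd, i1, i2, i3, fac, if_true]
      refine ⟨trivial, by ring, by ring⟩
  have hBp : 0 < B := by linarith
  set c := σ.ρ * 32768 * (B ^ (σ.t + 2)) ^ gExp s with hc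
  have hbound : ∀ k : ℕ, 1 < |c| * (1 / 2) ^ k := by
    intro k
    obtain ⟨i1, i2, i3⟩ := hall k
    have hnt := hcon (j + k) (by omega) i1
    unfold Sched.Trig at hnt
    rw [i2, i3, not_le] at hnt
    have e : B ^ (σ.t + N * k + 2) = B ^ (σ.t + 2) * (B ^ N) ^ k := by rw [← pow_mul]; ring
    have e2 : ((B ^ N) ^ k) ^ gExp s = ((B ^ N) ^ gExp s) ^ k := by
      rw [← Real.rpow_natCast, ← Real.rpow_mul (by positivity), mul_comm,
        Real.rpow_mul (by positivity), Real.rpow_natCast]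
    rw [e, Real.mul_rpow (by positivity) (by positivity), e2] at hnt
    have h1 : θ * (B ^ N) ^ gExp s ≤ 1 / 2 := by
      calc θ * (B ^ N) ^ gExp s ≤ (B ^ N) ^ (-gExp s) / 2 * (B ^ N) ^ gExp s := by gcongr
        _ = 1 / 2 := by
          rw [Real.rpow_neg (by positivity)]
          have : (B ^ N) ^ gExp s ≠ 0 := by positivity
          field_simp
    calc 1 < c * (θ * (B ^ N) ^ gExp s) ^ k := by rw [mul_pow, hc]; linarith
      _ ≤ |c| * (θ * (B ^ N) ^ gExp s) ^ k := by gcongr; exact le_abs_self c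
      _ ≤ |c| * (1 / 2) ^ k := by gcongr
  have hlim : Tendsto (fun k : ℕ => |c| * (1 / 2 : ℝ) ^ k) atTop (nhds 0) := by
    simpa using (tendsto_pow_atTop_nhds_zero_of_lt_one (r := (1 / 2 : ℝ))
          (by norm_num) (by norm_num)).const_mul |c|
  have := ge_of_tendsto' hlim (fun k => (hbound k).le)
  linarith

/-- A choice of words (`A i = 0`) and large digits keeping the ball estimate valid, with
infinitely many triples of large digits whose adjacent products are at least `B^{t+2}`, where
`t` is the number of digits preceding the triple. -/
theorem exists_schedule (hB : 1 < B) (hs : 1 / 2 < s) (hs1 : s < 1) (hθ : 0 < θ)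
    (hθB : θ ≤ (B ^ N) ^ (-gExp s) / 2) :
    ∃ A : ℕ → ℕ, (∀ i, A i = 0 ∨ 2 ≤ A i) ∧
      (∀ j, (∏ i ∈ Finset.range j, fac s θ (A i)) * (max (A j : ℝ) 1) ^ s ≤ 1) ∧
      ∀ m, ∃ j ≥ m, A j ≠ 0 ∧ A (j + 1) ≠ 0 ∧ A (j + 2) ≠ 0 ∧
        B ^ ((∑ i ∈ Finset.range j, if A i = 0 then N else 1) + 2) ≤ (A j : ℝ) * A (j + 1) ∧
        B ^ ((∑ i ∈ Finset.range j, if A i = 0 then N else 1) + 2) ≤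
          (A (j + 1) : ℝ) * A (j + 2) := by
  have hg : 0 < gExp s := by unfold gExp; nlinarith
  have hθ1 : θ ≤ 1 := by
    refine hθB.trans ?_
    have : (B ^ N) ^ (-gExp s) ≤ 1 :=
      Real.rpow_le_one_of_one_le_of_nonpos (one_le_pow₀ hB.le) (by linarith)
    linarith
  set st := sched B s θ N with hst
  have hinv : ∀ j, (st j).Inv B s := by
    intro j
    induction j with
    | zero => simp [hst, sched, Sched.Inv]
    | succ j ih => exact ih.next hB hs hs1 hθ hθ1
  refine ⟨fun i => (st i).digit B s, fun i => Sched.digit_alt hB hs hs1 _, fun j => ?_,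
    fun m => ?_⟩
  · have hρ : ∏ i ∈ Finset.range j, fac s θ ((st i).digit B s) = (st j).ρ := by
      induction j with
      | zero => simp [hst, sched]
      | succ j ih => rw [Finset.prod_range_succ, ih]; rfl
    rw [hρ]
    exact (hinv j).bound hB hs hs1
  · obtain ⟨j, hj, hp, htr⟩ := exists_trig (s := s) (N := N) hB hθ hθB m
    have ht : (∑ i ∈ Finset.range j, if (st i).digit B s = 0 then N else 1) = (st j).t := by
      clear hp htr hj
      induction j with
      | zero => simp [hst, sched]
      | succ j ih => rw [Finset.sum_range_succ, ih]; rfl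
    have hb := one_lt_pow' hB (st j).t
    have hy1 : 1 < (B ^ ((st j).t + 2)) ^ (1 - s) := Real.one_lt_rpow hb (by linarith)
    have hy2 : 1 < (B ^ ((st j).t + 2)) ^ s := Real.one_lt_rpow hb (by linarith)
    have d0 : (st j).digit B s = ⌈(B ^ ((st j).t + 2)) ^ (1 - s)⌉₊ := by
      rw [← hst] at hp htr
      simp [Sched.digit, hp, htr]
    have l1 := two_le_ceil hy1
    have l2 := two_le_ceil hy2
    have hne : (st j).digit B s ≠ 0 := by omega
    have hp1 : (st (j + 1)).ph = 1 ∧ (st (j + 1)).t0 = (st j).t := by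
      rw [← hst] at hp
      constructor <;> simp [hst, sched, Sched.next] <;> simp [← hst, hp, hne]
    have hp2 : (st (j + 2)).ph = 2 ∧ (st (j + 2)).t0 = (st j).t := by
      have : st (j + 2) = (st (j + 1)).next B s θ N := rfl
      rw [this]
      simp [Sched.next, hp1.1, hp1.2]
    have d1 : (st (j + 1)).digit B s = ⌈(B ^ ((st j).t + 2)) ^ s⌉₊ := by
      simp [Sched.digit, hp1.1, hp1.2]
    have d2 : (st (j + 2)).digit B s = ⌈(B ^ ((st j).t + 2)) ^ (1 - s)⌉₊ := by
      simp [Sched.digit, hp2.1, hp2.2]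
    have key : B ^ ((st j).t + 2) ≤
        (⌈(B ^ ((st j).t + 2)) ^ (1 - s)⌉₊ : ℝ) * ⌈(B ^ ((st j).t + 2)) ^ s⌉₊ := by
      have hbp : 0 < B ^ ((st j).t + 2) := by linarith
      calc B ^ ((st j).t + 2) = (B ^ ((st j).t + 2)) ^ (1 - s) * (B ^ ((st j).t + 2)) ^ s := by
            rw [← Real.rpow_add hbp]; simp
        _ ≤ _ := by gcongr <;> exact Nat.le_ceil _
    refine ⟨j, hj, hne, by beta_reduce; omega, by beta_reduce; omega, ?_, ?_⟩ <;> beta_reduce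
    · rw [ht, d0, d1]; exact key
    · rw [ht, d1, d2, mul_comm]; exact key

end Schedule

/-! ### Finitely supported block distributions -/

/-- The measure on words giving mass `f w` to each `w ∈ T`. -/
noncomputable def finMeas (T : Finset (List ℕ)) (f : List ℕ → ℝ) : Measure (List ℕ) :=
  ∑ w ∈ T, ENNReal.ofReal (f w) • Measure.dirac w

open Classical in
lemma finMeas_apply (T : Finset (List ℕ)) (f : List ℕ → ℝ) (U : Set (List ℕ)) :
    finMeas T f U = ∑ w ∈ T with w ∈ U, ENNReal.ofReal (f w) := by
  have : ∀ w, Measure.dirac w U = if w ∈ U then 1 else 0 := by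
    intro w
    rw [Measure.dirac_apply' _ (MeasurableSpace.measurableSet_top)]
    simp [Set.indicator]
  simp [finMeas, Measure.finsetSum_apply, this, Finset.sum_filter]

open Classical in
lemma finMeas_real {T : Finset (List ℕ)} {f : List ℕ → ℝ} (hf : ∀ w ∈ T, 0 ≤ f w)
    (U : Set (List ℕ)) : (finMeas T f).real U = ∑ w ∈ T with w ∈ U, f w := by
  rw [Measure.real, finMeas_apply, ← ENNReal.ofReal_sum_of_nonneg, ENNReal.toReal_ofReal]
  · exact Finset.sum_nonneg fun w hw => hf w (Finset.mem_filter.1 hw).1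
  · exact fun w hw => hf w (Finset.mem_filter.1 hw).1

lemma finMeas_compl (T : Finset (List ℕ)) (f : List ℕ → ℝ) :
    finMeas T f (T : Set (List ℕ))ᶜ = 0 := by
  classical
  rw [finMeas_apply]
  apply Finset.sum_eq_zero
  intro w hw
  simp at hw

lemma finMeas_prob {T : Finset (List ℕ)} {f : List ℕ → ℝ} (hf : ∀ w ∈ T, 0 ≤ f w)
    (h1 : ∑ w ∈ T, f w = 1) : IsProbabilityMeasure (finMeas T f) := by
  classical
  constructor
  rw [finMeas_apply]
  simp only [Set.mem_univ, Finset.filter_true]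
  rw [← ENNReal.ofReal_sum_of_nonneg hf, h1, ENNReal.ofReal_one]

/-! ### Separation of the images of different blocks -/

lemma abs_inv_sub_inv {u v K d : ℝ} (hu : 0 < u) (hv : 0 < v) (huK : u ≤ K) (hvK : v ≤ K)
    (_hd : 0 ≤ d) (h : d ≤ |u - v|) : d / K ^ 2 ≤ |1 / u - 1 / v| := by
  have e : |1 / u - 1 / v| = |u - v| / (u * v) := by
    rw [div_sub_div _ _ hu.ne' hv.ne', abs_div, abs_of_pos (mul_pos hu hv), abs_sub_comm]
    ring_nf
  rw [e]
  gcongr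
  nlinarith

/-- Distinct integer parts stay separated when the fractional parts differ by at most `1 - η`. -/
lemma le_abs_add_sub {a b : ℕ} (hab : a ≠ b) {y y' η : ℝ} (hη : η ≤ 1)
    (h : |y - y'| ≤ 1 - η) : η * |(a : ℝ) - b| ≤ |((a : ℝ) + y) - (b + y')| := by
  have h1 : (1 : ℝ) ≤ |(a : ℝ) - b| := by
    have : (1 : ℤ) ≤ |(a : ℤ) - b| := Int.one_le_abs (by omega)
    exact_mod_cast this
  have h2 : |(a : ℝ) - b| ≤ |((a : ℝ) + y) - (b + y')| + |y - y'| := by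
    calc |(a : ℝ) - b| = |((a : ℝ) + y - (b + y')) - (y - y')| := by ring_nf
      _ ≤ _ := abs_sub _ _
  nlinarith

lemma inv_le_cfMap {K : ℝ} {w : List ℕ} (hw : PosW w) (hne : w ≠ [])
    (hK : ∀ a ∈ w, (a : ℝ) + 1 ≤ K) {y : ℝ} (hy : y ∈ Set.Icc (0 : ℝ) 1) :
    1 / K ≤ cfMap w y := by
  cases w with
  | nil => exact absurd rfl hne
  | cons a w =>
    have h := cfMap_mem hw.tail hy
    have ha := hw.head
    have hk := hK a (by simp)
    rw [cfMap_cons]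
    have h0 := h.1
    have h1 := h.2
    gcongr
    linarith

lemma cfMap_close {K : ℝ} {w w' : List ℕ} (hl : w.length = w'.length) (hw : PosW w)
    (hw' : PosW w') (hK : ∀ a ∈ w, (a : ℝ) + 1 ≤ K) (hK' : ∀ a ∈ w', (a : ℝ) + 1 ≤ K)
    {y y' : ℝ} (hy : y ∈ Set.Icc (0 : ℝ) 1) (hy' : y' ∈ Set.Icc (0 : ℝ) 1)
    (h : |y - y'| ≤ 1 - 1 / K) : |cfMap w y - cfMap w' y'| ≤ 1 - 1 / K := by
  by_cases hne : w = []
  · subst hne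
    have : w' = [] := List.length_eq_zero_iff.1 hl.symm
    subst this
    simpa using h
  · have hne' : w' ≠ [] := by
      rintro rfl
      exact hne (List.length_eq_zero_iff.1 hl)
    have h1 := inv_le_cfMap hw hne hK hy
    have h2 := inv_le_cfMap hw' hne' hK' hy'
    have h3 := (cfMap_mem hw hy).2
    have h4 := (cfMap_mem hw' hy').2
    rw [abs_le]
    constructor <;> linarith

/-- Branches of distinct words of equal length and bounded digits have separated images, as soon
as the tails are within `1 - 1/K`. -/
lemma word_sep {K : ℝ} (hK2 : 2 ≤ K) {w w' : List ℕ} (hl : w.length = w'.length)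
    (hne : w ≠ w') (hw : PosW w) (hw' : PosW w') (hK : ∀ a ∈ w, (a : ℝ) + 1 ≤ K)
    (hK' : ∀ a ∈ w', (a : ℝ) + 1 ≤ K) {y y' : ℝ} (hy : y ∈ Set.Icc (0 : ℝ) 1)
    (hy' : y' ∈ Set.Icc (0 : ℝ) 1) (h : |y - y'| ≤ 1 - 1 / K) :
    1 / K / (K ^ 2) ^ w.length ≤ |cfMap w y - cfMap w' y'| := by
  induction w generalizing w' with
  | nil =>
    exact absurd (List.length_eq_zero_iff.1 hl.symm).symm hne
  | cons a w ih =>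
    cases w' with
    | nil => simp at hl
    | cons b w' =>
      have hl' : w.length = w'.length := by simpa using hl
      have hKw : ∀ a ∈ w, (a : ℝ) + 1 ≤ K := fun c hc => hK c (by simp [hc])
      have hKw' : ∀ a ∈ w', (a : ℝ) + 1 ≤ K := fun c hc => hK' c (by simp [hc])
      have hz := cfMap_mem hw.tail hy
      have hz' := cfMap_mem hw'.tail hy'
      have ha := hw.head
      have hb := hw'.head
      have haK := hK a (by simp)
      have hbK := hK' b (by simp)
      have hc := cfMap_close hl' hw.tail hw'.tail hKw hKw' hy hy' h
      have hK0 : 0 < K := by linarith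
      have hK1 : 1 ≤ (K ^ 2) ^ w.length := one_le_pow₀ (by nlinarith)
      rw [cfMap_cons, cfMap_cons, List.length_cons, pow_succ, ← div_div]
      apply abs_inv_sub_inv (by linarith [hz.1]) (by linarith [hz'.1]) (by linarith [hz.2])
        (by linarith [hz'.2]) (by positivity)
      by_cases hab : a = b
      · subst hab
        have hww : w ≠ w' := fun e => hne (by rw [e])
        have := ih hl' hww hw.tail hw'.tail hKw hKw'
        rwa [add_sub_add_left_eq_sub]
      · have hη : 1 / K ≤ 1 := by rw [div_le_one hK0]; linarith
        have h1 := le_abs_add_sub hab hη hc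
        have h2 : (1 : ℝ) ≤ |(a : ℝ) - b| := by
          have : (1 : ℤ) ≤ |(a : ℤ) - b| := Int.one_le_abs (by omega)
          exact_mod_cast this
        calc 1 / K / (K ^ 2) ^ w.length ≤ 1 / K := div_le_self (by positivity) hK1
          _ ≤ 1 / K * |(a : ℝ) - b| := le_mul_of_one_le_right (by positivity) h2
          _ ≤ _ := h1

/-- The number of integers within `R` of a given integer `a` is at most `3R` once `R ≥ 1`. -/
lemma card_near {T : Finset ℕ} {a : ℕ} {R : ℝ} (hR : 1 ≤ R)
    (h : ∀ b ∈ T, |(a : ℝ) - b| ≤ R) : (T.card : ℝ) ≤ 3 * R := by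
  have hsub : T ⊆ Finset.Icc (a - ⌊R⌋₊) (a + ⌊R⌋₊) := by
    intro b hb
    have := abs_le.1 (h b hb)
    rw [Finset.mem_Icc]
    have h1 : (b : ℝ) - a ≤ R := by linarith
    have h2 : (a : ℝ) - b ≤ R := by linarith
    constructor
    · by_contra hc
      have : b + ⌊R⌋₊ + 1 ≤ a := by omega
      have : (b : ℝ) + ⌊R⌋₊ + 1 ≤ a := by exact_mod_cast this
      have := Nat.lt_floor_add_one R
      linarith
    · by_contra hc
      have : a + ⌊R⌋₊ + 1 ≤ b := by omega
      have : (a : ℝ) + ⌊R⌋₊ + 1 ≤ b := by exact_mod_cast this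
      have := Nat.lt_floor_add_one R
      linarith
  have h1 := Finset.card_le_card hsub
  rw [Nat.card_Icc] at h1
  have h2 : T.card ≤ 2 * ⌊R⌋₊ + 1 := by omega
  have h3 : (T.card : ℝ) ≤ 2 * ⌊R⌋₊ + 1 := by exact_mod_cast h2
  have := Nat.floor_le (show 0 ≤ R by linarith)
  linarith

lemma le_rpow_of_le_one {p z s : ℝ} (hp0 : 0 ≤ p) (hp : p ≤ 1) (hpz : p ≤ z) (hs : 0 < s)
    (hs1 : s ≤ 1) : p ≤ z ^ s := by
  rcases hp0.eq_or_lt with rfl | h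
  · positivity
  calc p = p ^ (1 : ℝ) := (Real.rpow_one p).symm
    _ ≤ p ^ s := Real.rpow_le_rpow_of_exponent_ge h hp hs1
    _ ≤ z ^ s := Real.rpow_le_rpow hp0 hpz hs.le

/-! ### The Cantor set -/

/-- The alphabet of a block: the words of `W` if `A = 0`, else the single digits in
`[A, 2A)`. -/
def blockSet (W : Finset (List ℕ)) (A : ℕ) : Finset (List ℕ) :=
  if A = 0 then W else (Finset.Ico A (2 * A)).image fun a => [a]

/-- The law of a block: proportional to `q(w)^{-2s}` on words, uniform on single digits. -/
noncomputable def blockWt (W : Finset (List ℕ)) (s : ℝ) (A : ℕ) (w : List ℕ) : ℝ :=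
  if A = 0 then (contQ w : ℝ) ^ (-(2 * s)) / ∑ v ∈ W, (contQ v : ℝ) ^ (-(2 * s)) else 1 / A

lemma mem_blockSet_large {W : Finset (List ℕ)} {A : ℕ} (hA : A ≠ 0) {w : List ℕ} :
    w ∈ blockSet W A ↔ ∃ a, A ≤ a ∧ a < 2 * A ∧ w = [a] := by
  simp only [blockSet, hA, if_false, Finset.mem_image, Finset.mem_Ico]
  constructor
  · rintro ⟨a, h, rfl⟩; exact ⟨a, h.1, h.2, rfl⟩
  · rintro ⟨a, h1, h2, rfl⟩; exact ⟨a, ⟨h1, h2⟩, rfl⟩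

lemma blockWt_nonneg (W : Finset (List ℕ)) (s : ℝ) (A : ℕ) (w : List ℕ) :
    0 ≤ blockWt W s A w := by
  unfold blockWt
  split_ifs
  · exact div_nonneg (by positivity) (Finset.sum_nonneg fun _ _ => by positivity)
  · positivity

lemma sum_blockWt {W : Finset (List ℕ)} {s : ℝ} {A : ℕ}
    (hZ : 0 < ∑ v ∈ W, (contQ v : ℝ) ^ (-(2 * s))) :
    ∑ w ∈ blockSet W A, blockWt W s A w = 1 := by
  by_cases hA : A = 0
  · simp only [blockSet, blockWt, hA, if_true]
    rw [← Finset.sum_div, div_self hZ.ne']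
  · simp only [blockSet, blockWt, hA, if_false]
    rw [Finset.sum_const, Finset.card_image_of_injective _ (by intro a b h; simpa using h),
      Nat.card_Ico, nsmul_eq_mul, show 2 * A - A = A by omega]
    field_simp

section Core

variable {W : Finset (List ℕ)} {N : ℕ} {K s : ℝ} {A : ℕ → ℕ}

lemma blockSet_valid (hN : 1 ≤ N) (hW : ∀ w ∈ W, w.length = N ∧ PosW w)
    (i : ℕ) {w : List ℕ} (hw : w ∈ blockSet W (A i)) : w ≠ [] ∧ PosW w := by
  by_cases h : A i = 0
  · rw [h, blockSet, if_pos rfl] at hw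
    refine ⟨?_, (hW w hw).2⟩
    rintro rfl
    have := (hW _ hw).1
    simp at this
    omega
  · obtain ⟨a, h1, h2, rfl⟩ := (mem_blockSet_large h).1 hw
    refine ⟨by simp, ?_⟩
    intro b hb
    simp at hb
    omega

lemma blockSet_length (hW : ∀ w ∈ W, w.length = N ∧ PosW w)
    (i : ℕ) {w : List ℕ} (hw : w ∈ blockSet W (A i)) :
    w.length = if A i = 0 then N else 1 := by
  by_cases h : A i = 0
  · rw [h, blockSet, if_pos rfl] at hw
    simp [h, (hW w hw).1]
  · obtain ⟨a, h1, h2, rfl⟩ := (mem_blockSet_large h).1 hw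
    simp [h]

/-- The points coded by two sequences from the same position onwards are within `1 - 1/K`:
both lie in `[1/K, 1]` if the first block is a word, and in `[0, 1/2]` if it is a large digit. -/
lemma tail_close (hN : 1 ≤ N) (hW : ∀ w ∈ W, w.length = N ∧ PosW w) (hK2 : 2 ≤ K)
    (hK : ∀ w ∈ W, ∀ a ∈ w, (a : ℝ) + 1 ≤ K) (hA : ∀ i, A i = 0 ∨ 2 ≤ A i) {ω ω' : ℕ → List ℕ}
    (hω : ∀ k, ω k ∈ blockSet W (A k)) (hω' : ∀ k, ω' k ∈ blockSet W (A k)) (i : ℕ) :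
    |cfLim (shift i ω) - cfLim (shift i ω')| ≤ 1 - 1 / K := by
  have hv : Valid ω := fun k => blockSet_valid hN hW k (hω k)
  have hv' : Valid ω' := fun k => blockSet_valid hN hW k (hω' k)
  have hm := (hv.shift i).cfLim_mem_Icc
  have hm' := (hv'.shift i).cfLim_mem_Icc
  have hKh : 1 / K ≤ 1 / 2 := by gcongr
  rcases hA i with h | h
  · have hlow : ∀ ω : ℕ → List ℕ, Valid ω → (∀ k, ω k ∈ blockSet W (A k)) →
        1 / K ≤ cfLim (shift i ω) := by
      intro ω hv hω
      rw [hv.cfLim_eq_one i]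
      have := hω i
      rw [h, blockSet, if_pos rfl] at this
      exact inv_le_cfMap (hv i).2 (hv i).1 (hK _ this) (hv.shift _).cfLim_mem_Icc
    have h1 := hlow ω hv hω
    have h2 := hlow ω' hv' hω'
    rw [abs_le]
    constructor <;> linarith [hm.1, hm.2, hm'.1, hm'.2]
  · have hup : ∀ ω : ℕ → List ℕ, Valid ω → (∀ k, ω k ∈ blockSet W (A k)) →
        cfLim (shift i ω) ≤ 1 / 2 := by
      intro ω hv hω
      rw [hv.cfLim_eq_one i]
      obtain ⟨a, h1, h2, e⟩ := (mem_blockSet_large (by omega)).1 (hω i)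
      have h0 := (hv.shift (i + 1)).cfLim_mem_Icc.1
      have h3 : (2 : ℝ) ≤ a := by exact_mod_cast h.trans h1
      rw [e, cfMap_cons, cfMap_nil]
      gcongr
      linarith
    have h1 := hup ω hv hω
    have h2 := hup ω' hv' hω'
    rw [abs_le]
    constructor <;> linarith [hm.1, hm.2, hm'.1, hm'.2]

/-- Two coded points within `r` have large digits within `4 A² K r` of each other. -/
lemma large_sep (hN : 1 ≤ N) (hW : ∀ w ∈ W, w.length = N ∧ PosW w) (hK2 : 2 ≤ K)
    (hK : ∀ w ∈ W, ∀ a ∈ w, (a : ℝ) + 1 ≤ K) (hA : ∀ i, A i = 0 ∨ 2 ≤ A i) {ω ω' : ℕ → List ℕ}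
    (hω : ∀ k, ω k ∈ blockSet W (A k)) (hω' : ∀ k, ω' k ∈ blockSet W (A k)) {i : ℕ}
    (hi : A i ≠ 0) {a b : ℕ} (ha : ω i = [a]) (hb : ω' i = [b]) {r : ℝ} (hr0 : 0 ≤ r)
    (hr : |cfLim (shift i ω) - cfLim (shift i ω')| ≤ r) :
    |(a : ℝ) - b| ≤ 4 * (A i : ℝ) ^ 2 * K * r := by
  have hK0 : 0 < K := by linarith
  by_cases hab : a = b
  · subst hab
    simp only [sub_self, abs_zero]
    positivity
  have hv : Valid ω := fun k => blockSet_valid hN hW k (hω k)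
  have hv' : Valid ω' := fun k => blockSet_valid hN hW k (hω' k)
  have hη : 1 / K ≤ 1 := by rw [div_le_one hK0]; linarith
  have hc := le_abs_add_sub hab hη (tail_close hN hW hK2 hK hA hω hω' (i + 1))
  have hm := (hv.shift (i + 1)).cfLim_mem_Icc
  have hm' := (hv'.shift (i + 1)).cfLim_mem_Icc
  rw [hv.cfLim_eq_one i, hv'.cfLim_eq_one i, ha, hb] at hr
  simp only [cfMap_cons, cfMap_nil] at hr
  obtain ⟨a', ha1, ha2, ea⟩ := (mem_blockSet_large hi).1 (hω i)
  obtain ⟨b', hb1, hb2, eb⟩ := (mem_blockSet_large hi).1 (hω' i)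
  rw [ha] at ea
  rw [hb] at eb
  obtain rfl : a = a' := by simpa using ea
  obtain rfl : b = b' := by simpa using eb
  have a1 : (1 : ℝ) ≤ a := by exact_mod_cast (by omega : 1 ≤ a)
  have b1 : (1 : ℝ) ≤ b := by exact_mod_cast (by omega : 1 ≤ b)
  have a2 : (a : ℝ) + 1 ≤ 2 * A i := by exact_mod_cast (by omega : a + 1 ≤ 2 * A i)
  have b2 : (b : ℝ) + 1 ≤ 2 * A i := by exact_mod_cast (by omega : b + 1 ≤ 2 * A i)
  have hA0 : (0 : ℝ) < A i := by exact_mod_cast Nat.pos_of_ne_zero hi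
  have h1 := (abs_inv_sub_inv (by linarith [hm.1]) (by linarith [hm'.1])
    (K := 2 * A i) (by linarith [hm.2]) (by linarith [hm'.2]) (by positivity) hc).trans hr
  rw [div_le_iff₀ (by positivity), div_mul_eq_mul_div, div_le_iff₀ hK0] at h1
  linarith

/-- A ball of radius `r` around a point of the Cantor set which meets at least two cylinders
of the `i`-th block meets cylinders of total mass `O(max(A_i, 1) r)`. -/
lemma block_mass (hN : 1 ≤ N) (hW : ∀ w ∈ W, w.length = N ∧ PosW w) (hK2 : 2 ≤ K)
    (hK : ∀ w ∈ W, ∀ a ∈ w, (a : ℝ) + 1 ≤ K) (hA : ∀ i, A i = 0 ∨ 2 ≤ A i)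
    (hZ : 0 < ∑ v ∈ W, (contQ v : ℝ) ^ (-(2 * s))) {ω ω' : ℕ → List ℕ}
    (hω : ∀ k, ω k ∈ blockSet W (A k)) (hω' : ∀ k, ω' k ∈ blockSet W (A k)) {i : ℕ}
    (hne : ω i ≠ ω' i) {r : ℝ} (hr : |cfLim (shift i ω) - cfLim (shift i ω')| ≤ r) :
    (finMeas (blockSet W (A i)) (blockWt W s (A i))).real
      {w | ∃ ω'' : ℕ → List ℕ, (∀ k, ω'' k ∈ blockSet W (A k)) ∧ ω'' i = w ∧
        |cfLim (shift i ω) - cfLim (shift i ω'')| ≤ r} ≤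
      12 * (K * (K ^ 2) ^ N) * max (A i : ℝ) 1 * r := by
  classical
  have := finMeas_prob (fun w _ => blockWt_nonneg W s (A i) w) (sum_blockWt (A := A i) hZ)
  have hr0 : 0 ≤ r := (abs_nonneg _).trans hr
  have hK0 : 0 < K := by linarith
  have hK1 : 1 ≤ (K ^ 2) ^ N := one_le_pow₀ (by nlinarith)
  have hv : Valid ω := fun k => blockSet_valid hN hW k (hω k)
  have hv' : Valid ω' := fun k => blockSet_valid hN hW k (hω' k)
  by_cases hi : A i = 0
  · refine measureReal_le_one.trans ?_
    have h1 := hω i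
    have h2 := hω' i
    rw [hi, blockSet, if_pos rfl] at h1 h2
    rw [hv.cfLim_eq_one i, hv'.cfLim_eq_one i] at hr
    have h3 := word_sep hK2 ((hW _ h1).1.trans (hW _ h2).1.symm) hne (hv i).2 (hv' i).2
      (hK _ h1) (hK _ h2) (hv.shift (i + 1)).cfLim_mem_Icc (hv'.shift (i + 1)).cfLim_mem_Icc
      (tail_close hN hW hK2 hK hA hω hω' (i + 1))
    rw [(hW _ h1).1] at h3
    have h4 := h3.trans hr
    rw [div_div, div_le_iff₀ (by positivity)] at h4
    simp only [hi, Nat.cast_zero, zero_le_one, max_eq_right, mul_one]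
    linarith
  · have hA2 : 2 ≤ A i := (hA i).resolve_left hi
    obtain ⟨a, ha1, ha2, ha⟩ := (mem_blockSet_large hi).1 (hω i)
    obtain ⟨b, hb1, hb2, hb⟩ := (mem_blockSet_large hi).1 (hω' i)
    have hA0 : (2 : ℝ) ≤ A i := by exact_mod_cast hA2
    set R := 4 * (A i : ℝ) ^ 2 * K * r with hR
    have hab := large_sep hN hW hK2 hK hA hω hω' hi ha hb hr0 hr
    have hR1 : 1 ≤ R := by
      refine le_trans ?_ hab
      have : a ≠ b := by rintro rfl; exact hne (ha.trans hb.symm)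
      have : (1 : ℤ) ≤ |(a : ℤ) - b| := Int.one_le_abs (by omega)
      exact_mod_cast this
    rw [finMeas_real fun w _ => blockWt_nonneg W s (A i) w]
    set U : Set (List ℕ) := {w | ∃ ω'' : ℕ → List ℕ, (∀ k, ω'' k ∈ blockSet W (A k)) ∧
      ω'' i = w ∧ |cfLim (shift i ω) - cfLim (shift i ω'')| ≤ r} with hU
    set T := (Finset.Ico (A i) (2 * A i)).filter fun c => [c] ∈ U with hT
    have hTe : (blockSet W (A i)).filter (fun w => w ∈ U) = T.image fun c => [c] := by
      simp only [blockSet, hi, if_false, hT, Finset.filter_image]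
    have hcard : (T.card : ℝ) ≤ 3 * R := by
      refine card_near (a := a) hR1 ?_
      intro c hc
      obtain ⟨ω'', h1, h2, h3⟩ := (Finset.mem_filter.1 hc).2
      exact large_sep hN hW hK2 hK hA hω h1 hi ha h2 hr0 h3
    rw [hTe]
    simp only [blockWt, hi, if_false]
    rw [Finset.sum_const, nsmul_eq_mul,
      Finset.card_image_of_injective _ (by intro a b h; simpa using h),
      max_eq_left (by linarith)]
    calc (T.card : ℝ) * (1 / A i) ≤ 3 * R * (1 / A i) := by gcongr
      _ = 12 * (K * 1) * A i * r := by rw [hR]; field_simp; ring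
      _ ≤ _ := by gcongr

/-- If some finite set of words of length `N` has a large enough partition sum at `s`, then `s`
is a lower bound for the dimension. -/
theorem core {B : ℝ} (hB : 1 < B) (hs : 1 / 2 < s) (hs1 : s < 1) (hN : 1 ≤ N)
    (hW : ∀ w ∈ W, w.length = N ∧ PosW w)
    (h8 : 8 ≤ ∑ w ∈ W, B ^ (-(N : ℝ) * (3 * s - 1 - s ^ 2)) * (contQ w : ℝ) ^ (-(2 * s))) :
    ENNReal.ofReal s ≤ dimH (F2 fun n : ℕ => B ^ n) := by
  set Z := ∑ v ∈ W, (contQ v : ℝ) ^ (-(2 * s)) with hZdef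
  have hBg : 0 < B ^ (-(N : ℝ) * (3 * s - 1 - s ^ 2)) := Real.rpow_pos_of_pos (by linarith) _
  rw [← Finset.mul_sum, ← hZdef] at h8
  have hZ : 0 < Z := by
    by_contra hc
    have := mul_nonpos_of_nonneg_of_nonpos hBg.le (not_lt.1 hc)
    linarith
  have hθ : 4 / Z ≤ (B ^ N) ^ (-gExp s) / 2 := by
    have e : (B ^ N : ℝ) ^ (-gExp s) = B ^ (-(N : ℝ) * (3 * s - 1 - s ^ 2)) := by
      rw [← Real.rpow_natCast, ← Real.rpow_mul (by linarith), gExp]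
      ring_nf
    rw [e, div_le_div_iff₀ hZ (by norm_num)]
    linarith
  obtain ⟨A, hA, hprod, hio⟩ := exists_schedule (N := N) hB hs hs1 (θ := 4 / Z)
    (by positivity) hθ
  obtain ⟨M, hM⟩ : ∃ M : ℕ, ∀ w ∈ W, ∀ a ∈ w, a ≤ M := by
    refine ⟨W.sup fun w => w.sum, fun w hw a ha => ?_⟩
    exact (List.single_le_sum (by simp) a ha).trans (Finset.le_sup (f := fun w => w.sum) hw)
  set K : ℝ := M + 2 with hKdef
  have hK2 : 2 ≤ K := by simp [hKdef]
  have hK : ∀ w ∈ W, ∀ a ∈ w, (a : ℝ) + 1 ≤ K := by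
    intro w hw a ha
    have : (a : ℝ) ≤ M := by exact_mod_cast hM w hw a ha
    rw [hKdef]; linarith
  set c : ℝ := 12 * (K * (K ^ 2) ^ N) with hc
  have hc1 : 1 ≤ c := by
    have : 1 ≤ (K ^ 2) ^ N := one_le_pow₀ (by nlinarith)
    nlinarith
  have hprob : ∀ i, IsProbabilityMeasure (finMeas (blockSet W (A i)) (blockWt W s (A i))) :=
    fun i => finMeas_prob (fun w _ => blockWt_nonneg W s (A i) w) (sum_blockWt hZ)
  have hfac : ∀ i, 4 * (fac s (4 / Z) (A i) / 4) = fac s (4 / Z) (A i) := fun i => by ring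
  have hcs : 1 ≤ c ^ s := Real.one_le_rpow hc1 (by linarith)
  have hprod0 : ∀ j, 0 ≤ ∏ i ∈ Finset.range j, fac s (4 / Z) (A i) := fun j =>
    Finset.prod_nonneg fun i _ => (fac_pos (by positivity) _).le
  refine le_dimH_of_blocks (P := fun i => finMeas (blockSet W (A i)) (blockWt W s (A i)))
    (S := fun i => (blockSet W (A i) : Set (List ℕ)))
    (G := fun i => fac s (4 / Z) (A i) / 4) (H := fun i => (c * max (A i : ℝ) 1) ^ s)
    (D := c ^ s) hs1.le (by linarith) (fun i => finMeas_compl _ _)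
    (fun i w hw => blockSet_valid hN hW i hw) ?_ ?_ ?_ ?_ ?_
  · intro i w hw
    have hw' : w ∈ blockSet W (A i) := hw
    have hq := contQ_pos (blockSet_valid hN hW i hw').2
    have e : (finMeas (blockSet W (A i)) (blockWt W s (A i))).real {w} =
        blockWt W s (A i) w := by
      classical
      rw [finMeas_real fun w _ => blockWt_nonneg W s (A i) w]
      simp [Finset.sum_filter, hw']
    rw [e]
    by_cases hi : A i = 0
    · simp only [blockWt, fac, hi, if_true]
      rw [← hZdef, div_mul_eq_mul_div, ← Real.rpow_add hq]
      simp only [neg_add_cancel, Real.rpow_zero]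
      apply le_of_eq
      ring
    · obtain ⟨a, ha1, ha2, rfl⟩ := (mem_blockSet_large hi).1 hw'
      simp only [blockWt, fac, hi, if_false]
      have hA0 : (0 : ℝ) < A i := by exact_mod_cast Nat.pos_of_ne_zero hi
      have e1 : contQ [a] = a := by simp [contQ]
      rw [e1]
      have h2 : (a : ℝ) ≤ 2 * A i := by exact_mod_cast ha2.le
      have h4 : (2 : ℝ) ^ (2 * s) ≤ 4 := by
        calc (2 : ℝ) ^ (2 * s) ≤ 2 ^ (2 : ℝ) :=
              Real.rpow_le_rpow_of_exponent_le (by norm_num) (by linarith)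
          _ = 4 := by norm_num
      calc 1 / (A i : ℝ) * (a : ℝ) ^ (2 * s) ≤ 1 / (A i : ℝ) * (2 * A i) ^ (2 * s) := by gcongr
        _ = 2 ^ (2 * s) * (A i : ℝ) ^ (2 * s - 1) := by
            rw [Real.mul_rpow (by norm_num) hA0.le, Real.rpow_sub hA0, Real.rpow_one]
            ring
        _ ≤ 4 * (A i : ℝ) ^ (2 * s - 1) := by gcongr
        _ = _ := by ring
  · intro i ω ω' hω hω' hne r hr
    have hr0 : 0 ≤ r := (abs_nonneg _).trans hr
    have := hprob i
    rw [← Real.mul_rpow (by positivity) hr0]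
    exact le_rpow_of_le_one measureReal_nonneg measureReal_le_one
      (block_mass hN hW hK2 hK hA hZ hω hω' hne hr) (by linarith) hs1.le
  · intro j
    simp only [hfac]
    have h1 : 1 ≤ (max (A j : ℝ) 1) ^ s := Real.one_le_rpow (le_max_right _ _) (by linarith)
    calc _ ≤ (∏ i ∈ Finset.range j, fac s (4 / Z) (A i)) * (max (A j : ℝ) 1) ^ s :=
          le_mul_of_one_le_right (hprod0 j) h1
      _ ≤ 1 := hprod j
      _ ≤ c ^ s := hcs
  · intro j
    simp only [hfac]
    rw [Real.mul_rpow (by linarith) (by positivity), mul_left_comm]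
    exact mul_le_of_le_one_right (by linarith) (hprod j)
  · intro ω hω
    have hω' : ∀ k, ω k ∈ blockSet W (A k) := hω
    have hv : Valid ω := fun k => blockSet_valid hN hW k (hω' k)
    apply hv.mem_F2
    have hlen : ∀ j, (pre ω j).length = ∑ i ∈ Finset.range j, if A i = 0 then N else 1 := by
      intro j
      induction j with
      | zero => simp [pre]
      | succ j ih =>
        rw [pre, List.length_append, ih, Finset.sum_range_succ, blockSet_length hW j (hω' j)]
    intro m
    obtain ⟨j, hj, h0, h1, h2, k1, k2⟩ := hio m
    obtain ⟨a, ha, -, ea⟩ := (mem_blockSet_large h0).1 (hω' j)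
    obtain ⟨b, hb, -, eb⟩ := (mem_blockSet_large h1).1 (hω' (j + 1))
    obtain ⟨d, hd, -, ed⟩ := (mem_blockSet_large h2).1 (hω' (j + 2))
    have ha' : (A j : ℝ) ≤ a := by exact_mod_cast ha
    have hb' : (A (j + 1) : ℝ) ≤ b := by exact_mod_cast hb
    have hd' : (A (j + 2) : ℝ) ≤ d := by exact_mod_cast hd
    refine ⟨j, hj, a, b, d, ea, eb, ed, ?_, ?_⟩
    · rw [hlen]
      exact k1.trans (by gcongr)
    · rw [hlen]
      exact k2.trans (by gcongr)

end Core

/-! ### The bound `s_B ≤ 1` -/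

/-- One step of the continuant recursion on pairs `(q_k, q_{k-1})`. -/
def qstep (p : ℕ × ℕ) (a : ℕ) : ℕ × ℕ := (a * p.1 + p.2, p.1)

lemma sum_step_le {x : ℕ} (hx : 1 ≤ x) (y : ℕ) :
    ∑' a : ℕ+, ENNReal.ofReal
      (1 / (((a : ℕ) * x + y : ℕ) * (((a : ℕ) * x + y : ℕ) + (x : ℝ)))) ≤
      ENNReal.ofReal (1 / ((x : ℝ) * (x + y))) := by
  have hx0 : (1 : ℝ) ≤ x := by exact_mod_cast hx
  rw [tsum_pnat_eq_tsum_succ (f := fun a : ℕ => ENNReal.ofReal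
      (1 / ((a * x + y : ℕ) * ((a * x + y : ℕ) + (x : ℝ)))))]
  apply ENNReal.tsum_le_of_sum_range_le
  intro n
  rw [← ENNReal.ofReal_sum_of_nonneg (fun _ _ => by positivity)]
  apply ENNReal.ofReal_le_ofReal
  have key : ∑ i ∈ Finset.range n, 1 / ((((i + 1) * x + y : ℕ) : ℝ) *
      ((((i + 1) * x + y : ℕ) : ℝ) + x)) = 1 / x * (1 / (x + y) - 1 / ((n + 1) * x + y)) := by
    induction n with
    | zero => simp
    | succ n ih =>
      rw [Finset.sum_range_succ, ih]
      push_cast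
      have h1 : ((n : ℝ) + 1) * x + y ≠ 0 := by positivity
      have h2 : ((n : ℝ) + 1 + 1) * x + y ≠ 0 := by positivity
      have h3 : ((n : ℝ) + 1) * x + y + x ≠ 0 := by positivity
      have h4 : (x : ℝ) + y ≠ 0 := by positivity
      have h5 : (x : ℝ) ≠ 0 := by positivity
      have e : ((n : ℝ) + 1 + 1) * x + y = ((n : ℝ) + 1) * x + y + x := by ring
      rw [e]
      field_simp
      ring
  rw [key]
  have : (0 : ℝ) ≤ 1 / ((n + 1) * x + y) := by positivity
  calc 1 / (x : ℝ) * (1 / (x + y) - 1 / ((n + 1) * x + y)) ≤ 1 / x * (1 / (x + y)) := by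
        gcongr; linarith
    _ = _ := by rw [div_mul_div_comm, one_mul]

/-- The intervals of numbers with prescribed first `n` partial quotients have lengths
`1 / (q_n (q_n + q_{n-1}))` with total at most one; the statement is relative to an arbitrary
starting pair so that it can be proved by induction on the first digit. -/
lemma sum_cylinder_le (n : ℕ) : ∀ x y : ℕ, 1 ≤ x →
    ∑' v : Fin n → ℕ+, ENNReal.ofReal
      (1 / ((((List.ofFn fun i => (v i : ℕ)).foldl qstep (x, y)).1 : ℝ) *
        ((((List.ofFn fun i => (v i : ℕ)).foldl qstep (x, y)).1 : ℝ) +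
          ((List.ofFn fun i => (v i : ℕ)).foldl qstep (x, y)).2))) ≤
      ENNReal.ofReal (1 / ((x : ℝ) * (x + y))) := by
  induction n with
  | zero => intro x y hx; simp
  | succ n ih =>
    intro x y hx
    rw [← (Fin.consEquiv fun _ : Fin (n + 1) => ℕ+).tsum_eq, ENNReal.tsum_prod']
    refine le_trans (ENNReal.tsum_le_tsum fun a => ?_) (sum_step_le hx y)
    have h := ih (a * x + y) x (by nlinarith [a.pos])
    refine le_trans (le_of_eq ?_) h
    refine tsum_congr fun v => ?_
    simp only [Fin.consEquiv_apply, List.ofFn_succ, Fin.cons_zero, Fin.cons_succ,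
      List.foldl_cons]
    rfl

lemma posW_ofFn {n : ℕ} (v : Fin n → ℕ+) : PosW (List.ofFn fun i => (v i : ℕ)) := by
  intro a ha
  obtain ⟨i, rfl⟩ := (List.mem_ofFn' _ _).1 ha
  exact (v i).pos

lemma presSum_one_le {B : ℝ} (hB : 1 < B) (n : ℕ) :
    presSum B 1 n ≤ ENNReal.ofReal (2 * (1 / B) ^ n) := by
  have h := sum_cylinder_le n 1 0 le_rfl
  simp only [Nat.cast_one, Nat.cast_zero, add_zero, mul_one, div_one, ENNReal.ofReal_one] at h
  have hB0 : 0 < B := by linarith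
  calc presSum B 1 n
      ≤ ∑' v : Fin n → ℕ+, ENNReal.ofReal (2 * (1 / B) ^ n) * ENNReal.ofReal
          (1 / ((((List.ofFn fun i => (v i : ℕ)).foldl qstep (1, 0)).1 : ℝ) *
            ((((List.ofFn fun i => (v i : ℕ)).foldl qstep (1, 0)).1 : ℝ) +
              ((List.ofFn fun i => (v i : ℕ)).foldl qstep (1, 0)).2))) := by
        unfold presSum
        refine ENNReal.tsum_le_tsum fun v => ?_
        rw [← ENNReal.ofReal_mul (by positivity)]
        apply ENNReal.ofReal_le_ofReal
        have hp := qpair_bounds (posW_ofFn v)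
        have e1 : (List.ofFn fun i => (v i : ℕ)).foldl qstep (1, 0) =
            qpair (List.ofFn fun i => (v i : ℕ)) := rfl
        rw [e1, contQ_eq]
        have q1 : (1 : ℝ) ≤ (qpair (List.ofFn fun i => (v i : ℕ))).1 := by exact_mod_cast hp.1
        have q2 : ((qpair (List.ofFn fun i => (v i : ℕ))).2 : ℝ) ≤
            (qpair (List.ofFn fun i => (v i : ℕ))).1 := by exact_mod_cast hp.2
        set q : ℝ := ((qpair (List.ofFn fun i => (v i : ℕ))).1 : ℝ)
        set q' : ℝ := ((qpair (List.ofFn fun i => (v i : ℕ))).2 : ℝ) with hq'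
        have hq'0 : 0 ≤ q' := by rw [hq']; positivity
        have e2 : B ^ (-(n : ℝ) * (3 * 1 - 1 - 1 ^ 2)) = (1 / B) ^ n := by
          rw [show -(n : ℝ) * (3 * 1 - 1 - 1 ^ 2) = -(n : ℝ) by ring, Real.rpow_neg hB0.le,
            Real.rpow_natCast, one_div, inv_pow]
        have e3 : q ^ (-(2 * 1) : ℝ) = 1 / q ^ 2 := by
          rw [Real.rpow_neg (by linarith), mul_one, Real.rpow_two, one_div]
        rw [e2, e3, mul_comm (2 : ℝ), mul_assoc]
        gcongr
        rw [mul_one_div, div_le_div_iff₀ (by positivity) (by positivity)]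
        nlinarith
    _ = ENNReal.ofReal (2 * (1 / B) ^ n) * _ := ENNReal.tsum_mul_left
    _ ≤ ENNReal.ofReal (2 * (1 / B) ^ n) * 1 := by gcongr
    _ = _ := mul_one _

lemma sB_le_one {B : ℝ} (hB : 1 < B) : sB B ≤ 1 := by
  apply csInf_le ⟨0, fun s hs => hs.1⟩
  refine ⟨zero_le_one, ?_⟩
  unfold pressure
  have hlim : Tendsto (fun n : ℕ => 2 * (1 / B) ^ n) atTop (nhds (2 * 0)) :=
    (tendsto_pow_atTop_nhds_zero_of_lt_one (by positivity)
      (by rw [div_lt_one (by linarith)]; exact hB)).const_mul 2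
  refine limsup_le_of_le (h := ?_)
  filter_upwards [hlim.eventually (gt_mem_nhds (show (2 : ℝ) * 0 < 1 by norm_num))] with n hn
  have h1 : presSum B 1 n ≤ 1 := by
    refine (presSum_one_le hB n).trans ?_
    rw [← ENNReal.ofReal_one]
    exact ENNReal.ofReal_le_ofReal hn.le
  have h2 : ENNReal.log (presSum B 1 n) ≤ 0 := by
    rw [← ENNReal.log_one]; exact ENNReal.log_monotone h1
  exact mul_nonpos_of_nonneg_of_nonpos (by exact_mod_cast (by positivity : (0:ℝ) ≤ (n : ℝ)⁻¹)) h2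

/-! ### Conclusion -/

/-- The dimension exceeds `1/2`: single-digit words suffice slightly above `s = 1/2`, where the
partition sum becomes the divergent harmonic series. -/
lemma exists_gt_half {B : ℝ} (hB : 1 < B) :
    ∃ s : ℝ, 1 / 2 < s ∧ ENNReal.ofReal s ≤ dimH (F2 fun n : ℕ => B ^ n) := by
  have hB0 : 0 < B := by linarith
  have hc : 0 < B ^ (-(1 : ℝ) * (3 * (1 / 2) - 1 - (1 / 2) ^ 2)) := Real.rpow_pos_of_pos hB0 _
  obtain ⟨M, hM⟩ := ((Real.tendsto_sum_range_one_div_nat_succ_atTop.const_mul_atTop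
    hc).eventually_gt_atTop 8).exists
  set F : ℝ → ℝ := fun s => ∑ i ∈ Finset.range M,
    B ^ (-(1 : ℝ) * (3 * s - 1 - s ^ 2)) * ((i : ℝ) + 1) ^ (-(2 * s)) with hF
  have hcont : Continuous F := by
    refine continuous_finsetSum _ fun i _ => ?_
    have hi : ((i : ℝ) + 1) ≠ 0 := by positivity
    exact (Continuous.rpow continuous_const (by fun_prop) fun _ => Or.inl hB0.ne').mul
      (Continuous.rpow continuous_const (by fun_prop) fun _ => Or.inl hi)
  have hhalf : 8 < F (1 / 2) := by
    refine lt_of_lt_of_eq hM ?_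
    rw [hF, Finset.mul_sum]
    refine Finset.sum_congr rfl fun i _ => ?_
    rw [show (-(2 * (1 / 2)) : ℝ) = -1 by norm_num, Real.rpow_neg_one, one_div (((i : ℝ) + 1))]
  have hev : ∀ᶠ s in nhdsWithin (1 / 2 : ℝ) (Set.Ioi (1 / 2)), 8 < F s :=
    (hcont.continuousAt.eventually (lt_mem_nhds hhalf)).filter_mono nhdsWithin_le_nhds
  obtain ⟨s, h8, hs⟩ := (hev.and (Ioo_mem_nhdsGT (show (1 / 2 : ℝ) < 1 by norm_num))).exists
  refine ⟨s, hs.1, core (N := 1) (W := (Finset.range M).image fun i => [i + 1]) hB hs.1 hs.2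
    le_rfl ?_ ?_⟩
  · intro w hw
    obtain ⟨i, -, rfl⟩ := Finset.mem_image.1 hw
    refine ⟨rfl, ?_⟩
    intro a ha
    simp at ha
    omega
  · rw [Finset.sum_image (by intro a _ b _ h; simpa using h)]
    refine h8.le.trans (le_of_eq ?_)
    refine Finset.sum_congr rfl fun i _ => ?_
    have e1 : contQ [i + 1] = i + 1 := by simp [contQ]
    rw [e1]
    push_cast
    rfl

lemma le_dimH_of_lt_sB {B t : ℝ} (hB : 1 < B) (ht : 1 / 2 < t) (htB : t < sB B) :
    ENNReal.ofReal t ≤ dimH (F2 fun n : ℕ => B ^ n) := by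
  have ht1 : t < 1 := htB.trans_le (sB_le_one hB)
  have hp : 0 < pressure B t := by
    by_contra hc
    have : sB B ≤ t := csInf_le ⟨0, fun s hs => hs.1⟩ ⟨by linarith, not_lt.1 hc⟩
    linarith
  obtain ⟨c, hc0, hcp⟩ := EReal.lt_iff_exists_real_btwn.1 hp
  have hc0' : 0 < c := by exact_mod_cast hc0
  have hfr := frequently_lt_of_lt_limsup (by isBoundedDefault) hcp
  obtain ⟨N, hlt, hN1, hNc⟩ := (hfr.and_eventually ((eventually_ge_atTop 1).and
    (tendsto_natCast_atTop_atTop.eventually_ge_atTop (Real.log 8 / c)))).exists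
  have hN0 : (0 : ℝ) < N := by exact_mod_cast hN1
  have h8 : 8 < presSum B t N := by
    by_contra hc
    have h1 : ENNReal.log (presSum B t N) ≤ ((Real.log 8 : ℝ) : EReal) := by
      refine (ENNReal.log_monotone (not_lt.1 hc)).trans (le_of_eq ?_)
      rw [← ENNReal.log_ofReal_of_pos (by norm_num)]
      norm_num
    have h2 : (((N : ℝ)⁻¹ : ℝ) : EReal) * ENNReal.log (presSum B t N) ≤
        (((N : ℝ)⁻¹ : ℝ) : EReal) * ((Real.log 8 : ℝ) : EReal) :=
      mul_le_mul_of_nonneg_left h1 (by exact_mod_cast (by positivity : (0:ℝ) ≤ (N : ℝ)⁻¹))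
    have h3 := hlt.trans_le h2
    have h4 : c < (N : ℝ)⁻¹ * Real.log 8 := by exact_mod_cast h3
    rw [div_le_iff₀ hc0'] at hNc
    rw [inv_mul_eq_div, lt_div_iff₀ hN0] at h4
    linarith
  rw [presSum, ENNReal.tsum_eq_iSup_sum] at h8
  obtain ⟨V, hV⟩ := lt_iSup_iff.1 h8
  rw [← ENNReal.ofReal_sum_of_nonneg (fun _ _ => by positivity)] at hV
  have hV' := ENNReal.toReal_lt_of_lt_ofReal hV
  refine core (N := N) (W := V.image fun v => List.ofFn fun i => (v i : ℕ)) hB ht ht1 hN1 ?_ ?_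
  · intro w hw
    obtain ⟨v, -, rfl⟩ := Finset.mem_image.1 hw
    exact ⟨by simp, posW_ofFn v⟩
  · rw [Finset.sum_image]
    · simpa using hV'.le
    · intro v _ v' _ h
      have := List.ofFn_injective h
      funext i
      exact PNat.eq (congrFun this i)

end F2Dim

theorem dimH_F2_ge_sB (B : ℝ) (hB : 1 < B) :
    ENNReal.ofReal (sB B) ≤ dimH (F2 fun n : ℕ => B ^ n) := by
  obtain ⟨s₀, hs₀, hd⟩ := F2Dim.exists_gt_half hB
  by_cases h : sB B ≤ s₀
  · exact (ENNReal.ofReal_le_ofReal h).trans hd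
  refine le_of_forall_lt_imp_le_of_dense fun c hc => ?_
  have hcs : c.toReal < sB B := ENNReal.toReal_lt_of_lt_ofReal hc
  calc c = ENNReal.ofReal c.toReal := (ENNReal.ofReal_toReal hc.ne_top).symm
    _ ≤ ENNReal.ofReal (max c.toReal s₀) := ENNReal.ofReal_le_ofReal (le_max_left _ _)
    _ ≤ _ := F2Dim.le_dimH_of_lt_sB hB (hs₀.trans_le (le_max_right _ _))
        (max_lt hcs (not_le.1 h))
end

section
/- Fix B ∈ (1,∞). For M ∈ ℕ let s_B(M) = inf{s ≥ 0 : P_B^M(s) ≤ 0}, where P_B^M(s) = lim_{n→∞} (1/n) log Σ_{(a_1,…,a_n)∈{1,…,M}ⁿ} B^{−n(3s−1−s²)} q_n(a_1,…,a_n)^{−2s}, and let s_B = inf{s ≥ 0 : P_B(s) ≤ 0}, where P_B(s) = lim_{n→∞} (1/n) log Σ_{(a_1,…,a_n)∈ℕⁿ} B^{−n(3s−1−s²)} q_n(a_1,…,a_n)^{−2s} ∈ (−∞,∞]. Then s_B(M) → s_B as M → ∞. -/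
/-!
The inequality `sBM B M ≤ sB B` holds because the sum over `{1, …, M}ⁿ` is part of the sum over
all words. For the lower limit, let `0 ≤ t < sB B`, so that `P_B(t) > 0`. Continuants satisfy
`q(uv) ≤ 2 q(u) q(v)` (`contQ_append_le`), so the restricted partition functions satisfy
`f_{m+n} ≥ 4^{-t} f_m f_n` (`fnM_add`). Positivity of `P_B(t)` provides an `n` for which the full
partition function exceeds `2 · 4^t`; being a supremum of the restricted ones
(`exists_lt_fnM`), it may be replaced by `f_n^M(t)` for all large `M`. Then
`f_{kn}^M(t) ≥ 2^k`, and since `f^M` decreases in `s` on `[0, 1]`, the pressure `P_B^M` is positive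
on all of `[0, t]` (`exists_pressureM_pos`), that is `sBM B M ≥ t`.

Both this monotonicity and the nonemptiness of the sets whose infima are taken rest on
`sB B ≤ 1`, i.e. on `P_B(1) ≤ 0`. This follows from `∑ q_n⁻² ≤ 2` (`presSum_one_le`), where `q_n⁻²`
is compared with the cylinder lengths `1 / (q_n (q_n + q_{n-1}))`, which add up to at most `1` by
telescoping (`tsum_cylinders_le`).
-/


open scoped ENNReal
open MeasureTheory Filter

/-- `f_n^M(s) = Σ_{(a_1,…,a_n) ∈ {1,…,M}ⁿ} B^{-n(3s-1-s²)} q_n(a_1,…,a_n)^{-2s}`. -/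
noncomputable def fnM (B : ℝ) (M n : ℕ) (s : ℝ) : ℝ :=
  ∑ v : Fin n → Fin M, B ^ (-(n : ℝ) * (3 * s - 1 - s ^ 2)) *
    (contQ (List.ofFn fun i => (v i : ℕ) + 1) : ℝ) ^ (-(2 * s))

/-- The restricted pressure `P_B^M(s) = lim_n (1/n) log f_n^M(s)`
(the limit exists, hence equals the `limsup`). -/
noncomputable def pressureM (B : ℝ) (M : ℕ) (s : ℝ) : ℝ :=
  Filter.atTop.limsup fun n : ℕ => Real.log (fnM B M n s) / n

/-- `s_B(M) = inf {s ≥ 0 : P_B^M(s) ≤ 0}`. -/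
noncomputable def sBM (B : ℝ) (M : ℕ) : ℝ := sInf {s : ℝ | 0 ≤ s ∧ pressureM B M s ≤ 0}

/-! ### Continuants -/

/-- One step of the continuant recursion, acting on the pair `(q_k, q_{k-1})`. -/
def contStep (p : ℕ × ℕ) (a : ℕ) : ℕ × ℕ := (a * p.1 + p.2, p.1)

lemma contQ_eq (l : List ℕ) : contQ l = (l.foldl contStep (1, 0)).1 := rfl

lemma foldl_contStep_le (l : List ℕ) (c : ℕ) (x y : ℕ × ℕ) (h1 : x.1 ≤ c * y.1)
    (h2 : x.2 ≤ c * y.2) :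
    (l.foldl contStep x).1 ≤ c * (l.foldl contStep y).1 := by
  induction l generalizing x y with
  | nil => simpa using h1
  | cons a l ih =>
    simp only [List.foldl_cons]
    refine ih _ _ ?_ h1
    simp only [contStep]
    nlinarith [Nat.mul_le_mul_left a h1]

lemma foldl_contStep_inv (l : List ℕ) (hl : ∀ a ∈ l, 1 ≤ a) (x : ℕ × ℕ) (h0 : 1 ≤ x.1)
    (h : x.2 ≤ x.1) :
    1 ≤ (l.foldl contStep x).1 ∧ (l.foldl contStep x).2 ≤ (l.foldl contStep x).1 := by
  induction l generalizing x with
  | nil => exact ⟨h0, h⟩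
  | cons a l ih =>
    simp only [List.foldl_cons]
    have ha : 1 ≤ a := hl a (by simp)
    refine ih (fun b hb => hl b (by simp [hb])) _ ?_ ?_ <;> simp only [contStep] <;> nlinarith

lemma one_le_contQ (l : List ℕ) (hl : ∀ a ∈ l, 1 ≤ a) : 1 ≤ contQ l :=
  (foldl_contStep_inv l hl (1, 0) le_rfl (by simp)).1

/-- Quasi-submultiplicativity of continuants under concatenation. -/
lemma contQ_append_le (l₁ l₂ : List ℕ) (h₁ : ∀ a ∈ l₁, 1 ≤ a) (h₂ : ∀ a ∈ l₂, 1 ≤ a) :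
    contQ (l₁ ++ l₂) ≤ 2 * contQ l₁ * contQ l₂ := by
  obtain ⟨_, hle⟩ := foldl_contStep_inv l₁ h₁ (1, 0) le_rfl (by simp)
  rw [contQ_eq, contQ_eq, contQ_eq, List.foldl_append]
  generalize l₁.foldl contStep (1, 0) = x at *
  cases l₂ with
  | nil => simp only [List.foldl_nil]; omega
  | cons a l =>
    simp only [List.foldl_cons]
    have ha : 1 ≤ a := h₂ a (by simp)
    apply foldl_contStep_le <;> simp only [contStep] <;> nlinarith

/-! ### Restricted partition functions -/

/-- The word `(v_1 + 1, …, v_n + 1)` with letters in `{1, …, M}`. -/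
def wordM {M n : ℕ} (v : Fin n → Fin M) : List ℕ := List.ofFn fun i => (v i : ℕ) + 1

lemma wordM_pos {M n : ℕ} (v : Fin n → Fin M) : ∀ a ∈ wordM v, 1 ≤ a := by
  intro a ha
  simp only [wordM, List.mem_ofFn] at ha
  obtain ⟨i, rfl⟩ := ha
  omega

lemma one_le_contQ_wordM {M n : ℕ} (v : Fin n → Fin M) : (1 : ℝ) ≤ contQ (wordM v) := by
  exact_mod_cast one_le_contQ _ (wordM_pos v)

lemma fnM_eq (B : ℝ) (M n : ℕ) (s : ℝ) :
    fnM B M n s = ∑ v : Fin n → Fin M, B ^ (-(n : ℝ) * (3 * s - 1 - s ^ 2)) *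
      (contQ (wordM v) : ℝ) ^ (-(2 * s)) := rfl

lemma fnM_zero (B : ℝ) (M : ℕ) (s : ℝ) : fnM B M 0 s = 1 := by
  simp [fnM, contQ]

lemma fnM_pos {B : ℝ} (hB : 1 < B) {M : ℕ} (hM : 1 ≤ M) (n : ℕ) (s : ℝ) : 0 < fnM B M n s := by
  rw [fnM_eq]
  have : Nonempty (Fin M) := ⟨⟨0, hM⟩⟩
  refine Finset.sum_pos (fun v _ => ?_) Finset.univ_nonempty
  have := one_le_contQ_wordM v
  positivity

/-- Quasi-supermultiplicativity of the partition functions. -/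
lemma fnM_add {B : ℝ} (hB : 1 < B) (M m n : ℕ) {s : ℝ} (hs : 0 ≤ s) :
    (2 : ℝ) ^ (-(2 * s)) * fnM B M m s * fnM B M n s ≤ fnM B M (m + n) s := by
  simp only [fnM_eq]
  rw [← (Fin.appendEquiv m n).sum_comp, Fintype.sum_prod_type, mul_assoc, Finset.sum_mul_sum,
    Finset.mul_sum]
  refine Finset.sum_le_sum fun v _ => ?_
  rw [Finset.mul_sum]
  refine Finset.sum_le_sum fun w _ => ?_
  have hw : wordM (Fin.appendEquiv m n (v, w)) = wordM v ++ wordM w := by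
    simp only [wordM, Fin.appendEquiv, Equiv.coe_fn_mk]
    rw [← List.ofFn_fin_append]
    congr 1
    ext i
    refine Fin.addCases (fun i => ?_) (fun i => ?_) i <;> simp
  rw [hw]
  have hB0 : 0 < B := by linarith
  have hv := one_le_contQ_wordM v
  have hw1 := one_le_contQ_wordM w
  have hvw : (1 : ℝ) ≤ contQ (wordM v ++ wordM w) := by
    exact_mod_cast one_le_contQ _ (by
      intro a ha
      rcases List.mem_append.1 ha with h | h
      · exact wordM_pos v a h
      · exact wordM_pos w a h)
  have hle : (contQ (wordM v ++ wordM w) : ℝ) ≤ 2 * contQ (wordM v) * contQ (wordM w) := by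
    exact_mod_cast contQ_append_le _ _ (wordM_pos v) (wordM_pos w)
  have h1 := Real.rpow_le_rpow_of_nonpos (by linarith) hle (by linarith : -(2 * s) ≤ 0)
  rw [Real.mul_rpow (by positivity) (by positivity), Real.mul_rpow (by positivity)
    (by positivity)] at h1
  have h2 : B ^ (-((m + n : ℕ) : ℝ) * (3 * s - 1 - s ^ 2)) =
      B ^ (-(m : ℝ) * (3 * s - 1 - s ^ 2)) * B ^ (-(n : ℝ) * (3 * s - 1 - s ^ 2)) := by
    rw [← Real.rpow_add hB0]; congr 1; push_cast; ring
  rw [h2]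
  refine le_trans (le_of_eq ?_) (mul_le_mul_of_nonneg_left h1 (by positivity))
  ring

lemma fnM_mul {B : ℝ} (hB : 1 < B) {M : ℕ} (hM : 1 ≤ M) (n k : ℕ) {s : ℝ} (hs : 0 ≤ s) :
    ((2 : ℝ) ^ (-(2 * s)) * fnM B M n s) ^ k ≤ fnM B M (k * n) s := by
  induction k with
  | zero => simp [fnM_zero]
  | succ k ih =>
    rw [pow_succ, Nat.succ_mul]
    refine le_trans ?_ (fnM_add hB M (k * n) n hs)
    have := fnM_pos hB hM n s
    refine le_trans (mul_le_mul_of_nonneg_right ih (by positivity)) (le_of_eq ?_)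
    ring

lemma fnM_le {B : ℝ} (hB : 1 < B) (M n : ℕ) {s : ℝ} (hs : 0 ≤ s) :
    fnM B M n s ≤ (M * B ^ (-(3 * s - 1 - s ^ 2))) ^ n := by
  have hB0 : 0 < B := by linarith
  rw [fnM_eq]
  refine (Finset.sum_le_card_nsmul _ _ (B ^ (-(n : ℝ) * (3 * s - 1 - s ^ 2))) ?_).trans ?_
  · intro v _
    exact mul_le_of_le_one_right (by positivity)
      (Real.rpow_le_one_of_one_le_of_nonpos (one_le_contQ_wordM v) (by linarith))
  · rw [mul_pow, ← Real.rpow_mul_natCast hB0.le]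
    simp only [Finset.card_univ, Fintype.card_pi_const, Fintype.card_fin, nsmul_eq_mul]
    push_cast
    apply le_of_eq
    congr 2
    ring

/-- For `s ≤ 1` both factors of each summand decrease in `s`. -/
lemma fnM_anti {B : ℝ} (hB : 1 < B) (M n : ℕ) {s t : ℝ} (hst : s ≤ t) (ht : t ≤ 1) :
    fnM B M n t ≤ fnM B M n s := by
  have hB0 : 0 < B := by linarith
  simp only [fnM_eq]
  refine Finset.sum_le_sum fun v _ => ?_
  have hv := one_le_contQ_wordM v
  refine mul_le_mul (Real.rpow_le_rpow_of_exponent_le hB.le ?_)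
    (Real.rpow_le_rpow_of_exponent_le hv (by linarith)) (by positivity) (by positivity)
  have : 3 * s - 1 - s ^ 2 ≤ 3 * t - 1 - t ^ 2 := by nlinarith
  have hn : (0 : ℝ) ≤ n := Nat.cast_nonneg n
  nlinarith

lemma fnM_bddAbove {B : ℝ} (hB : 1 < B) {M : ℕ} (hM : 1 ≤ M) {s : ℝ} (hs : 0 ≤ s) :
    IsBoundedUnder (· ≤ ·) atTop fun n : ℕ => Real.log (fnM B M n s) / n := by
  have hM' : (0 : ℝ) < M := by exact_mod_cast hM
  refine isBoundedUnder_of_eventually_le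
    (a := Real.log (M * B ^ (-(3 * s - 1 - s ^ 2)))) ?_
  filter_upwards [eventually_gt_atTop 0] with n hn
  have hn' : (0 : ℝ) < n := by exact_mod_cast hn
  rw [div_le_iff₀ hn', mul_comm, ← Real.log_pow]
  exact Real.log_le_log (fnM_pos hB hM n s) (fnM_le hB M n hs)

lemma fnM_bddBelow {B : ℝ} (hB : 1 < B) {M : ℕ} (hM : 1 ≤ M) {s : ℝ} (hs : 0 ≤ s) :
    IsBoundedUnder (· ≥ ·) atTop fun n : ℕ => Real.log (fnM B M n s) / n := by
  have h1 := fnM_pos hB hM 1 s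
  refine isBoundedUnder_of_eventually_ge
    (a := Real.log ((2 : ℝ) ^ (-(2 * s)) * fnM B M 1 s)) ?_
  filter_upwards [eventually_gt_atTop 0] with n hn
  have hn' : (0 : ℝ) < n := by exact_mod_cast hn
  rw [le_div_iff₀ hn', mul_comm, ← Real.log_pow]
  exact Real.log_le_log (by positivity) (by simpa using fnM_mul hB hM 1 n hs)

/-! ### Comparison of restricted and full partition functions -/

/-- The summand of `presSum`. -/
noncomputable def presTerm (B s : ℝ) (n : ℕ) (v : Fin n → ℕ+) : ℝ≥0∞ :=
  ENNReal.ofReal (B ^ (-(n : ℝ) * (3 * s - 1 - s ^ 2)) *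
      (contQ (List.ofFn fun i => ((v i : ℕ))) : ℝ) ^ (-(2 * s)))

lemma presSum_eq (B s : ℝ) (n : ℕ) : presSum B s n = ∑' v, presTerm B s n v := rfl

/-- The inclusion of words over `{1, …, M}` (indexed by `Fin M`) into words over `ℕ+`. -/
def embM (M n : ℕ) (v : Fin n → Fin M) : Fin n → ℕ+ := fun i => (v i : ℕ).succPNat

lemma embM_injective (M n : ℕ) : Function.Injective (embM M n) := by
  intro v w h
  ext i
  have := congrArg PNat.val (congrFun h i)
  simpa [embM] using this

lemma ofReal_fnM {B : ℝ} (hB : 1 < B) (M n : ℕ) (s : ℝ) :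
    ENNReal.ofReal (fnM B M n s) = ∑ v : Fin n → Fin M, presTerm B s n (embM M n v) := by
  rw [fnM, ENNReal.ofReal_sum_of_nonneg]
  · rfl
  · intro v _
    have : 0 < B := by linarith
    positivity

lemma ofReal_fnM_le {B : ℝ} (hB : 1 < B) (M n : ℕ) (s : ℝ) :
    ENNReal.ofReal (fnM B M n s) ≤ presSum B s n := by
  rw [ofReal_fnM hB, presSum_eq, ← tsum_fintype (L := .unconditional _)]
  exact ENNReal.tsum_comp_le_tsum_of_injective (embM_injective M n) _

/-- The full partition function is the limit of the increasing restricted ones. -/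
lemma exists_lt_fnM {B : ℝ} (hB : 1 < B) (n : ℕ) (s : ℝ) {c : ℝ≥0∞} (hc : c < presSum B s n) :
    ∃ M₀, ∀ M, M₀ ≤ M → c < ENNReal.ofReal (fnM B M n s) := by
  classical
  rw [presSum_eq, ENNReal.tsum_eq_iSup_sum, lt_iSup_iff] at hc
  obtain ⟨S, hS⟩ := hc
  refine ⟨S.sup fun v => Finset.univ.sup fun i => (v i : ℕ), fun M hM => hS.trans_le ?_⟩
  rw [ofReal_fnM hB, ← Finset.sum_image (s := Finset.univ) (g := embM M n)
    (f := presTerm B s n) (fun a _ b _ h => embM_injective M n h)]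
  refine Finset.sum_le_sum_of_subset fun v hv => ?_
  have hvi : ∀ i, (v i : ℕ) ≤ M := fun i =>
    (Finset.le_sup (f := fun i => (v i : ℕ)) (Finset.mem_univ i)).trans
      ((Finset.le_sup (f := fun v : Fin n → ℕ+ => Finset.univ.sup fun i => (v i : ℕ)) hv).trans hM)
  refine Finset.mem_image.2 ⟨fun i => ⟨(v i).natPred, ?_⟩, Finset.mem_univ _, ?_⟩
  · have := hvi i
    have h2 := (v i).natPred_add_one
    omega
  · ext i
    simp [embM]

/-! ### The partition functions at `s = 1` -/

/-- Telescoping bound; the left side sums the lengths of the subintervals of a cylinder. -/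
lemma tsum_cylinder_le (p q : ℕ) (hp : 1 ≤ p) :
    ∑' a : ℕ+, ENNReal.ofReal (1 / (((a : ℕ) * p + q : ℕ) * (((a : ℕ) * p + q : ℕ) + p : ℝ))) ≤
      ENNReal.ofReal (1 / ((p : ℝ) * (p + q))) := by
  rw [tsum_pnat_eq_tsum_succ (f := fun a : ℕ =>
    ENNReal.ofReal (1 / (((a : ℕ) * p + q : ℕ) * (((a : ℕ) * p + q : ℕ) + p : ℝ))))]
  refine ENNReal.tsum_le_of_sum_range_le fun N => ?_
  have hp' : (0 : ℝ) < p := by exact_mod_cast hp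
  have hq' : (0 : ℝ) ≤ q := Nat.cast_nonneg q
  rw [← ENNReal.ofReal_sum_of_nonneg (fun i _ => by positivity)]
  apply ENNReal.ofReal_le_ofReal
  have key : ∀ N : ℕ, ∑ a ∈ Finset.range N,
      1 / ((((a + 1 : ℕ) : ℕ) * p + q : ℕ) * ((((a + 1 : ℕ) : ℕ) * p + q : ℕ) + p : ℝ)) =
      1 / ((p : ℝ) * (p + q)) - 1 / ((p : ℝ) * ((N + 1) * p + q)) := by
    intro N
    induction N with
    | zero => simp
    | succ N ih =>
      rw [Finset.sum_range_succ, ih]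
      push_cast
      have h1 : (0 : ℝ) < (N + 1) * p + q := by positivity
      have h2 : (0 : ℝ) < (N + 1) * p + q + p := by positivity
      have h3 : ((N : ℝ) + 1 + 1) * p + q = (N + 1) * p + q + p := by ring
      rw [h3]
      field_simp
      ring
  rw [key]
  have : 0 ≤ 1 / ((p : ℝ) * ((N + 1) * p + q)) := by positivity
  linarith

/-- The cylinders of order `n` inside a given cylinder have total length at most its length. -/
lemma tsum_cylinders_le (n p q : ℕ) (hp : 1 ≤ p) :
    ∑' v : Fin n → ℕ+, (fun x : ℕ × ℕ => ENNReal.ofReal (1 / ((x.1 : ℝ) * (x.1 + x.2))))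
      ((List.ofFn fun i => ((v i : ℕ))).foldl contStep (p, q)) ≤
      ENNReal.ofReal (1 / ((p : ℝ) * (p + q))) := by
  induction n generalizing p q with
  | zero => simp
  | succ n ih =>
    rw [← (Fin.consEquiv fun _ => ℕ+).tsum_eq, ENNReal.tsum_prod']
    refine le_trans (ENNReal.tsum_le_tsum fun a => ?_) (tsum_cylinder_le p q hp)
    have ha : 1 ≤ (a : ℕ) := a.pos
    refine le_trans (le_of_eq ?_) (ih ((a : ℕ) * p + q) p (by nlinarith))
    refine tsum_congr fun v => ?_
    simp [Fin.consEquiv, List.ofFn_succ, contStep]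

/-- At `s = 1` the partition functions are bounded, because `q_n⁻²` is at most twice the length
`1 / (q_n (q_n + q_{n-1}))` of the corresponding cylinder. -/
lemma presSum_one_le {B : ℝ} (hB : 1 < B) (n : ℕ) : presSum B 1 n ≤ 2 := by
  have hB0 : 0 < B := by linarith
  have h := tsum_cylinders_le n 1 0 le_rfl
  rw [presSum_eq]
  have h2 : (2 : ℝ≥0∞) = 2 * ENNReal.ofReal (1 / (((1 : ℕ) : ℝ) * ((1 : ℕ) + (0 : ℕ)))) := by simp
  rw [h2]
  refine le_trans ?_ (mul_le_mul_right h 2)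
  rw [← ENNReal.tsum_mul_left]
  refine ENNReal.tsum_le_tsum fun v => ?_
  rw [presTerm, contQ_eq]
  obtain ⟨h1, hle⟩ := foldl_contStep_inv (List.ofFn fun i => ((v i : ℕ)))
    (by
      intro a ha
      simp only [List.mem_ofFn] at ha
      obtain ⟨i, rfl⟩ := ha
      exact (v i).pos) (1, 0) le_rfl (by simp)
  generalize (List.ofFn fun i => ((v i : ℕ))).foldl contStep (1, 0) = x at *
  have h1' : (1 : ℝ) ≤ x.1 := by exact_mod_cast h1
  have hle' : (x.2 : ℝ) ≤ x.1 := by exact_mod_cast hle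
  have h3 : (2 : ℝ≥0∞) = ENNReal.ofReal 2 := by simp
  simp only []
  rw [h3, ← ENNReal.ofReal_mul (by norm_num)]
  apply ENNReal.ofReal_le_ofReal
  have hBn : B ^ (-(n : ℝ) * (3 * 1 - 1 - 1 ^ 2)) ≤ 1 :=
    Real.rpow_le_one_of_one_le_of_nonpos hB.le (by
      have : (0 : ℝ) ≤ n := Nat.cast_nonneg n
      linarith)
  refine (mul_le_of_le_one_left (by positivity) hBn).trans ?_
  have h4 : (x.1 : ℝ) ^ (-(2 * 1) : ℝ) = 1 / (x.1 * x.1) := by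
    rw [Real.rpow_neg (by positivity), mul_one]
    norm_num [sq]
  rw [h4]
  have : (0 : ℝ) ≤ x.2 := Nat.cast_nonneg _
  rw [mul_one_div, div_le_div_iff₀ (by positivity) (by positivity)]
  nlinarith

lemma pressure_one_le {B : ℝ} (hB : 1 < B) : pressure B 1 ≤ 0 := by
  have hlim : Tendsto (fun n : ℕ => (((n : ℝ)⁻¹ * Real.log 2 : ℝ) : EReal)) atTop
      (nhds ((0 : ℝ) : EReal)) := by
    refine (continuous_coe_real_ereal.tendsto _).comp ?_
    simpa using tendsto_inv_atTop_nhds_zero_nat.mul_const (Real.log 2)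
  rw [← EReal.coe_zero, ← hlim.limsup_eq]
  refine limsup_le_limsup (Eventually.of_forall fun n => ?_)
  simp only [EReal.coe_mul]
  refine mul_le_mul_of_nonneg_left ?_ (by exact_mod_cast inv_nonneg.2 (Nat.cast_nonneg n))
  refine (ENNReal.log_le_log_iff.2 (presSum_one_le hB n)).trans (le_of_eq ?_)
  rw [show (2 : ℝ≥0∞) = ENNReal.ofReal 2 by simp, ENNReal.log_ofReal_of_pos (by norm_num)]

/-! ### Comparison of the pressures -/

lemma pressureM_le_zero {B : ℝ} (hB : 1 < B) {M : ℕ} (hM : 1 ≤ M) {s : ℝ} (hs : 0 ≤ s)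
    (h : pressure B s ≤ 0) : pressureM B M s ≤ 0 := by
  refine le_of_forall_pos_le_add fun ε hε => ?_
  rw [zero_add]
  have hlt : pressure B s < (ε : EReal) := h.trans_lt (by exact_mod_cast hε)
  refine limsup_le_of_le (fnM_bddBelow hB hM hs).isCoboundedUnder_le ?_
  filter_upwards [eventually_lt_of_limsup_lt hlt] with n hn
  rw [← EReal.coe_le_coe_iff]
  refine le_trans ?_ hn.le
  rw [div_eq_inv_mul, EReal.coe_mul]
  refine mul_le_mul_of_nonneg_left ?_ (by exact_mod_cast inv_nonneg.2 (Nat.cast_nonneg n))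
  rw [← ENNReal.log_ofReal_of_pos (fnM_pos hB hM n s)]
  exact ENNReal.log_le_log_iff.2 (ofReal_fnM_le hB M n s)

/-- If the full pressure is positive, the partition functions are unbounded. -/
lemma exists_lt_presSum {B t : ℝ} (h : 0 < pressure B t) {c : ℝ} (hc : 0 < c) :
    ∃ n : ℕ, 0 < n ∧ ENNReal.ofReal c < presSum B t n := by
  obtain ⟨ε, hε0, hε⟩ := EReal.lt_iff_exists_real_btwn.1 h
  have hε0' : 0 < ε := by exact_mod_cast hε0
  have hf := frequently_lt_of_lt_limsup (by isBoundedDefault) hε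
  obtain ⟨n, hn, hn0, hnc⟩ := (hf.and_eventually ((eventually_gt_atTop 0).and
    ((tendsto_natCast_atTop_atTop (R := ℝ)).eventually_gt_atTop (Real.log c / ε)))).exists
  refine ⟨n, hn0, ?_⟩
  have hn' : (0 : ℝ) < n := by exact_mod_cast hn0
  rw [← ENNReal.log_lt_log_iff, ENNReal.log_ofReal_of_pos hc]
  by_contra! hle
  have h1 : (((n : ℝ)⁻¹ : ℝ) : EReal) * ENNReal.log (presSum B t n) ≤
      (((n : ℝ)⁻¹ * Real.log c : ℝ) : EReal) := by
    rw [EReal.coe_mul]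
    exact mul_le_mul_of_nonneg_left hle (by exact_mod_cast (inv_pos.2 hn').le)
  have h2 : ε < (n : ℝ)⁻¹ * Real.log c := by exact_mod_cast hn.trans_le h1
  rw [div_lt_iff₀ hε0'] at hnc
  rw [lt_inv_mul_iff₀ hn'] at h2
  linarith

/-- A positive full pressure at `t` is detected by all large alphabets, uniformly on `[0, t]`. -/
lemma exists_pressureM_pos {B : ℝ} (hB : 1 < B) {t : ℝ} (ht0 : 0 ≤ t) (ht1 : t ≤ 1)
    (h : 0 < pressure B t) :
    ∃ M₀, ∀ M, M₀ ≤ M → ∀ s, 0 ≤ s → s ≤ t → 0 < pressureM B M s := by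
  -- Above the threshold `2 * 4 ^ t`, the factor `4 ^ (-t)` of supermultiplicativity leaves
  -- at least `2`, so that `f_{kn} ≥ 2 ^ k`.
  obtain ⟨n, hn0, hn⟩ := exists_lt_presSum h (c := 2 * (2 : ℝ) ^ (2 * t)) (by positivity)
  obtain ⟨M₀, hM₀⟩ := exists_lt_fnM hB n t hn
  refine ⟨max M₀ 1, fun M hM s hs0 hst => ?_⟩
  have hM1 : 1 ≤ M := (le_max_right _ _).trans hM
  have h1 := (ENNReal.ofReal_lt_ofReal_iff (fnM_pos hB hM1 n t)).1
    (hM₀ M ((le_max_left _ _).trans hM))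
  have h2 : (2 : ℝ) ≤ (2 : ℝ) ^ (-(2 * t)) * fnM B M n t := by
    rw [Real.rpow_neg (by norm_num), le_inv_mul_iff₀ (by positivity)]
    linarith
  have hn' : (0 : ℝ) < n := by exact_mod_cast hn0
  have hlog : 0 < Real.log 2 := Real.log_pos (by norm_num)
  refine lt_of_lt_of_le (div_pos hlog hn') ?_
  refine le_limsup_of_frequently_le ?_ (fnM_bddAbove hB hM1 hs0)
  rw [frequently_atTop]
  intro N
  refine ⟨(N + 1) * n, by nlinarith, ?_⟩
  have h3 : (2 : ℝ) ^ (N + 1) ≤ fnM B M ((N + 1) * n) s :=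
    (pow_le_pow_left₀ (by norm_num) h2 _).trans
      ((fnM_mul hB hM1 n (N + 1) ht0).trans (fnM_anti hB M _ hst ht1))
  have h4 := Real.log_le_log (by positivity) h3
  rw [Real.log_pow] at h4
  push_cast at h4 ⊢
  rw [div_le_div_iff₀ hn' (by positivity)]
  nlinarith

theorem tendsto_sBM (B : ℝ) (hB : 1 < B) :
    Filter.Tendsto (fun M : ℕ => sBM B M) Filter.atTop (nhds (sB B)) := by
  have hbdd : BddBelow {s : ℝ | 0 ≤ s ∧ pressure B s ≤ 0} := ⟨0, fun s hs => hs.1⟩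
  have hmem : (1 : ℝ) ∈ {s : ℝ | 0 ≤ s ∧ pressure B s ≤ 0} :=
    ⟨zero_le_one, pressure_one_le hB⟩
  have hsub : ∀ M, 1 ≤ M → {s : ℝ | 0 ≤ s ∧ pressure B s ≤ 0} ⊆
      {s : ℝ | 0 ≤ s ∧ pressureM B M s ≤ 0} := fun M hM s hs =>
    ⟨hs.1, pressureM_le_zero hB hM hs.1 hs.2⟩
  have hsB1 : sB B ≤ 1 := csInf_le hbdd hmem
  have hupper : ∀ M, 1 ≤ M → sBM B M ≤ sB B := fun M hM =>
    csInf_le_csInf ⟨0, fun s hs => hs.1⟩ ⟨1, hmem⟩ (hsub M hM)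
  rw [tendsto_order]
  refine ⟨fun r hr => ?_, fun r hr => ?_⟩
  · obtain ⟨t, hrt, htB⟩ := exists_between hr
    rcases lt_or_ge t 0 with ht | ht
    · refine Eventually.of_forall fun M => ?_
      exact (hrt.trans ht).trans_le (Real.sInf_nonneg fun s hs => hs.1)
    · have hp : 0 < pressure B t := by
        by_contra! hle
        exact absurd (csInf_le hbdd (show t ∈ {s : ℝ | 0 ≤ s ∧ pressure B s ≤ 0} from ⟨ht, hle⟩))
          (not_le.2 htB)
      obtain ⟨M₀, hM₀⟩ := exists_pressureM_pos hB ht (htB.le.trans hsB1) hp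
      filter_upwards [eventually_ge_atTop (max M₀ 1)] with M hM
      refine hrt.trans_le (le_csInf ⟨1, hsub M ((le_max_right _ _).trans hM) hmem⟩ ?_)
      intro s hs
      by_contra! hlt
      exact absurd hs.2 (not_le.2 (hM₀ M ((le_max_left _ _).trans hM) s hs.1 hlt.le))
  · filter_upwards [eventually_ge_atTop 1] with M hM
    exact (hupper M hM).trans_lt hr
end
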